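/- arXiv:0812.0372 — 2 statements merged into one kernel-verified Lean document; each statement's English description precedes it below -/
import Mathlib

section
/- Let D ≥ 3 and let G be a finite simple graph with maximum degree at most D that contains no clique on D+1 vertices. Then for every integer c ≥ 2, G admits a proper vertex coloring with D colors that is (c,p)-nondegenerate, where p = (c³ + 8c² + 19c + 6)(c+1). -/
open scoped Classical in
/-- The neighbours of `x` inside the finite set `Y`. -/
noncomputable def nbrIn {V : Type*} (F : SimpleGraph V) (x : V) (Y : Finset V) : Finset V :=
  Y.filter (F.Adj x)

theorem mem_nbrIn {V : Type*} {F : SimpleGraph V} {x y : V} {Y : Finset V} :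
    y ∈ nbrIn F x Y ↔ y ∈ Y ∧ F.Adj x y := by
  simp [nbrIn]

theorem nbrIn_mono {V : Type*} {F : SimpleGraph V} {x : V} {Y Z : Finset V} (h : Y ⊆ Z) :
    nbrIn F x Y ⊆ nbrIn F x Z := fun _ hy => by
  rw [mem_nbrIn] at hy ⊢
  exact ⟨h hy.1, hy.2⟩

/-- `φ` is a proper colouring of `F` on `Y` that takes its colours from the lists `L`. -/
def GoodOn {V α : Type*} (F : SimpleGraph V) (L : V → Finset α) (Y : Finset V) (φ : V → α) :
    Prop :=
  (∀ u ∈ Y, φ u ∈ L u) ∧ ∀ u ∈ Y, ∀ v ∈ Y, F.Adj u v → φ u ≠ φ v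

open scoped Classical in
theorem exists_greedy_closure {V α : Type*} (F : SimpleGraph V) (L : V → Finset α) (Y : Finset V)
    (h : ∀ y ∈ Y, (nbrIn F y Y).card ≤ (L y).card) :
    ∃ Λ ⊆ Y, (∀ y ∈ Y, (nbrIn F y Y).card < (L y).card → y ∈ Λ) ∧
      (∀ y ∈ Y, ∀ z ∈ Λ, F.Adj y z → y ∈ Λ) ∧
      ∀ φ : V → α, GoodOn F L (Y \ Λ) φ →
        ∃ ψ : V → α, (∀ u, u ∉ Λ → ψ u = φ u) ∧ GoodOn F L Y ψ := by
  let P : Finset V → Prop := fun Λ => ∀ φ : V → α, GoodOn F L (Y \ Λ) φ →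
        ∃ ψ : V → α, (∀ u, u ∉ Λ → ψ u = φ u) ∧ GoodOn F L Y ψ
  have hne : (Y.powerset.filter P).Nonempty := by
    refine ⟨∅, ?_⟩
    simp only [Finset.mem_filter, Finset.mem_powerset, Finset.empty_subset, true_and]
    intro φ hφ
    exact ⟨φ, fun _ _ => rfl, by simpa using hφ⟩
  obtain ⟨Λ, hΛ, hmax⟩ := Finset.exists_max_image _ Finset.card hne
  simp only [Finset.mem_filter, Finset.mem_powerset] at hΛ hmax
  have key : ∀ y ∈ Y, ((nbrIn F y Y).card < (L y).card ∨ ∃ z ∈ Λ, F.Adj y z) → y ∈ Λ := by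
    intro y hy hor
    by_contra hyΛ
    have hlt : (nbrIn F y (Y \ insert y Λ)).card < (L y).card := by
      rcases hor with hlt | ⟨z, hz, hyz⟩
      · exact lt_of_le_of_lt (Finset.card_le_card (nbrIn_mono Finset.sdiff_subset)) hlt
      · refine lt_of_lt_of_le (Finset.card_lt_card ?_) (h y hy)
        refine Finset.ssubset_iff_subset_ne.2 ⟨nbrIn_mono Finset.sdiff_subset, ?_⟩
        intro he
        have : z ∈ nbrIn F y Y := mem_nbrIn.2 ⟨hΛ.1 hz, hyz⟩
        rw [← he, mem_nbrIn] at this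
        simp [hz] at this
    have hP : P (insert y Λ) := by
      intro φ hφ
      obtain ⟨a, haL, ha⟩ : ∃ a ∈ L y, a ∉ (nbrIn F y (Y \ insert y Λ)).image φ := by
        apply Finset.exists_mem_notMem_of_card_lt_card
        exact lt_of_le_of_lt Finset.card_image_le hlt
      have ha' : ∀ w ∈ Y \ insert y Λ, F.Adj y w → φ w ≠ a := by
        intro w hw hyw he
        exact ha (Finset.mem_image.2 ⟨w, mem_nbrIn.2 ⟨hw, hyw⟩, he⟩)
      obtain ⟨ψ, hψ, hg⟩ := hΛ.2 (Function.update φ y a) ⟨by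
        intro u hu
        by_cases huy : u = y
        · subst huy; simpa using haL
        · rw [Function.update_of_ne huy]
          exact hφ.1 u (by simp at hu ⊢; tauto), by
        intro u hu v hv huv
        by_cases huy : u = y
        · subst huy
          have hvu : v ≠ u := huv.ne'
          rw [Function.update_self, Function.update_of_ne hvu]
          exact (ha' v (by simp at hv ⊢; tauto) huv).symm
        · by_cases hvy : v = y
          · subst hvy
            rw [Function.update_self, Function.update_of_ne huy]
            exact ha' u (by simp at hu ⊢; tauto) huv.symm
          · rw [Function.update_of_ne huy, Function.update_of_ne hvy]
            exact hφ.2 u (by simp at hu ⊢; tauto) v (by simp at hv ⊢; tauto) huv⟩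
      refine ⟨ψ, fun u hu => ?_, hg⟩
      simp only [Finset.mem_insert, not_or] at hu
      rw [hψ u hu.2, Function.update_of_ne hu.1]
    have := hmax (insert y Λ) ⟨Finset.insert_subset hy hΛ.1, hP⟩
    rw [Finset.card_insert_of_notMem hyΛ] at this
    omega
  exact ⟨Λ, hΛ.1, fun y hy hl => key y hy (Or.inl hl),
    fun y hy z hz hyz => key y hy (Or.inr ⟨z, hz, hyz⟩), hΛ.2⟩

/-- `φ` is a proper colouring of `F` on `Y`. -/
def ProperOn {V α : Type*} (F : SimpleGraph V) (Y : Finset V) (φ : V → α) : Prop :=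
  ∀ u ∈ Y, ∀ v ∈ Y, F.Adj u v → φ u ≠ φ v

theorem ProperOn.mono {V α : Type*} {F : SimpleGraph V} {Y Z : Finset V} {φ : V → α}
    (h : ProperOn F Z φ) (hYZ : Y ⊆ Z) : ProperOn F Y φ :=
  fun u hu v hv => h u (hYZ hu) v (hYZ hv)

open scoped Classical in
theorem exists_pinned_closure {V : Type*} (F : SimpleGraph V) (K : ℕ) (S Y : Finset V)
    (hSY : Disjoint S Y) (hdeg : ∀ y ∈ Y, (nbrIn F y (S ∪ Y)).card ≤ K) (f : V → Fin K) :
    ∃ Λ ⊆ Y, (∀ y ∈ Y, ((nbrIn F y S).image f).card + (nbrIn F y Y).card < K → y ∈ Λ) ∧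
      (∀ y ∈ Y, ∀ z ∈ Λ, F.Adj y z → y ∈ Λ) ∧
      ∀ φ : V → Fin K, (∀ u ∈ S, φ u = f u) → ProperOn F ((S ∪ Y) \ Λ) φ →
        ∃ ψ : V → Fin K, (∀ u, u ∉ Λ → ψ u = φ u) ∧ ProperOn F (S ∪ Y) ψ := by
  have hsplit : ∀ y, (nbrIn F y (S ∪ Y)).card = (nbrIn F y S).card + (nbrIn F y Y).card := by
    intro y
    unfold nbrIn
    rw [Finset.filter_union, Finset.card_union_of_disjoint (Finset.disjoint_filter_filter hSY)]
  let L : V → Finset (Fin K) := fun y => Finset.univ \ (nbrIn F y S).image f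
  have hL : ∀ y, (L y).card = K - ((nbrIn F y S).image f).card := by
    intro y
    rw [Finset.card_sdiff_of_subset (Finset.subset_univ _)]
    simp
  obtain ⟨Λ, hΛ, h1, h2, h3⟩ := exists_greedy_closure F L Y (by
    intro y hy
    have := hdeg y hy
    rw [hsplit] at this
    rw [hL]
    have := Finset.card_image_le (s := nbrIn F y S) (f := f)
    omega)
  refine ⟨Λ, hΛ, fun y hy hlt => h1 y hy (by rw [hL]; omega), h2, ?_⟩
  intro φ hφS hφ
  have hSΛ : ∀ u ∈ S, u ∉ Λ := fun u hu hu' => Finset.disjoint_left.1 hSY hu (hΛ hu')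
  obtain ⟨ψ, hψ, hg1, hg2⟩ := h3 φ ⟨by
    intro u hu
    rw [Finset.mem_sdiff] at hu
    simp only [L, Finset.mem_sdiff, Finset.mem_univ, true_and, Finset.mem_image, mem_nbrIn]
    rintro ⟨w, ⟨hwS, huw⟩, hw⟩
    rw [← hφS w hwS] at hw
    exact hφ u (by simp [hu]) w (by simp [hwS, hSΛ w hwS]) huw hw.symm, by
    refine ProperOn.mono hφ ?_
    intro u
    simp
    tauto⟩
  refine ⟨ψ, hψ, ?_⟩
  have hψS : ∀ u ∈ S, ψ u = f u := fun u hu => by rw [hψ u (hSΛ u hu), hφS u hu]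
  have hcross : ∀ u ∈ S, ∀ v ∈ Y, F.Adj u v → ψ u ≠ ψ v := by
    intro u hu v hv huv he
    have := hg1 v hv
    simp only [L, Finset.mem_sdiff, Finset.mem_univ, true_and, Finset.mem_image, mem_nbrIn] at this
    exact this ⟨u, ⟨hu, huv.symm⟩, by rw [← hψS u hu, he]⟩
  intro u hu v hv huv
  rw [Finset.mem_union] at hu hv
  rcases hu with hu | hu <;> rcases hv with hv | hv
  · rw [hψ u (hSΛ u hu), hψ v (hSΛ v hv)]
    exact hφ u (by simp [hu, hSΛ u hu]) v (by simp [hv, hSΛ v hv]) huv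
  · exact hcross u hu v hv huv
  · exact (hcross v hv u hu huv.symm).symm
  · exact hg2 u hu v hv huv

theorem forall_mem_of_isChain {V : Type*} {F : SimpleGraph V} {Λ : Set V} :
    ∀ {l : List V}, l.IsChain F.Adj →
      (∀ y ∈ l, ∀ z ∈ Λ, F.Adj y z → y ∈ Λ) → (∃ y ∈ l, y ∈ Λ) → ∀ y ∈ l, y ∈ Λ
  | [], _, _, _ => by simp
  | [a], _, _, h => by simpa using h
  | a :: b :: l, hc, hcl, h => by
    rw [List.isChain_cons_cons] at hc
    have ih := forall_mem_of_isChain (Λ := Λ) hc.2 (fun y hy => hcl y (List.mem_cons_of_mem _ hy))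
    have hab : a ∈ Λ → b ∈ Λ := fun ha => hcl b (by simp) a ha hc.1.symm
    have hba : b ∈ Λ → a ∈ Λ := fun hb => hcl a (by simp) b hb hc.1
    obtain ⟨y, hy, hyΛ⟩ := h
    have hb : ∃ y ∈ b :: l, y ∈ Λ := by
      rcases List.mem_cons.1 hy with rfl | hy
      · exact ⟨b, by simp, hab hyΛ⟩
      · exact ⟨y, hy, hyΛ⟩
    intro x hx
    rcases List.mem_cons.1 hx with rfl | hx
    · exact hba (ih hb b (by simp))
    · exact ih hb x hx

open scoped Classical in
/-- A proper colouring of `S` extends to a connected set `Y` if one vertex of `Y` sees a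
repeated colour on `S`. -/
theorem exists_properOn_of_connected {V : Type*} (F : SimpleGraph V) (K : ℕ) (S Y : Finset V)
    (hSY : Disjoint S Y) (hdeg : ∀ y ∈ Y, (nbrIn F y (S ∪ Y)).card ≤ K) (f : V → Fin K)
    (hf : ProperOn F S f) {y a b : V} (hy : y ∈ Y)
    (hconn : ∀ Λ : Set V, y ∈ Λ → (∀ u ∈ Y, ∀ z ∈ Λ, F.Adj u z → u ∈ Λ) → ∀ u ∈ Y, u ∈ Λ) (ha : a ∈ S) (hb : b ∈ S) (hab : a ≠ b)
    (hya : F.Adj y a) (hyb : F.Adj y b) (hfab : f a = f b) :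
    ∃ ψ : V → Fin K, ProperOn F (S ∪ Y) ψ := by
  obtain ⟨Λ, hΛ, h1, h2, h3⟩ := exists_pinned_closure F K S Y hSY hdeg f
  have hyΛ : y ∈ Λ := by
    apply h1 y hy
    refine lt_of_lt_of_le ?_ (hdeg y hy)
    have hsplit : (nbrIn F y (S ∪ Y)).card = (nbrIn F y S).card + (nbrIn F y Y).card := by
      unfold nbrIn
      rw [Finset.filter_union, Finset.card_union_of_disjoint (Finset.disjoint_filter_filter hSY)]
    rw [hsplit]
    have : ((nbrIn F y S).image f).card < (nbrIn F y S).card := by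
      refine lt_of_le_of_ne Finset.card_image_le fun he => hab ?_
      exact Finset.card_image_iff.1 he (mem_nbrIn.2 ⟨ha, hya⟩) (mem_nbrIn.2 ⟨hb, hyb⟩) hfab
    omega
  have hall : ∀ z ∈ Y, z ∈ Λ := hconn (Λ : Set V) hyΛ h2
  obtain ⟨ψ, -, hψ⟩ := h3 f (fun _ _ => rfl) (hf.mono (by
    intro u hu
    rw [Finset.mem_sdiff, Finset.mem_union] at hu
    exact hu.1.resolve_right fun h => hu.2 (hall u h)))
  exact ⟨ψ, hψ⟩

theorem List.exists_split_first {V : Type*} (p : V → Prop) :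
    ∀ {l : List V}, (∃ x ∈ l, p x) →
      ∃ l₁ x l₂, l = l₁ ++ x :: l₂ ∧ p x ∧ ∀ y ∈ l₁, ¬ p y
  | [], h => by simp at h
  | a :: l, h => by
    by_cases ha : p a
    · exact ⟨[], a, l, rfl, ha, by simp⟩
    · obtain ⟨l₁, x, l₂, rfl, hx, h₁⟩ := List.exists_split_first p (l := l) (by simpa [ha] using h)
      exact ⟨a :: l₁, x, l₂, rfl, hx, by simpa [ha] using h₁⟩

theorem List.exists_split_last {V : Type*} (p : V → Prop) {l : List V} (h : ∃ x ∈ l, p x) :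
    ∃ l₁ x l₂, l = l₁ ++ x :: l₂ ∧ p x ∧ ∀ y ∈ l₂, ¬ p y := by
  obtain ⟨l₁, x, l₂, hl, hx, h₁⟩ := List.exists_split_first p (l := l.reverse) (by simpa using h)
  refine ⟨l₂.reverse, x, l₁.reverse, ?_, hx, by simpa using h₁⟩
  have := congrArg List.reverse hl
  simpa using this

open scoped Classical in
/-- The colouring step for a cycle that leaves part of `S` uncovered and sends an edge there. -/
theorem exists_properOn_of_cycle {V : Type*} (G : SimpleGraph V) (D : ℕ) (S : Finset V)
    (hdeg : ∀ v ∈ S, (nbrIn G v S).card ≤ D) {h x : V} {l : List V}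
    (hnodup : (h :: (l ++ [x])).Nodup) (hchain : (h :: (l ++ [x])).IsChain G.Adj)
    (hhx : G.Adj h x) (hsub : ∀ v ∈ h :: (l ++ [x]), v ∈ S)
    (hh : ∀ a ∈ S, G.Adj h a → a ∈ h :: (l ++ [x]))
    (hout : ∃ v ∈ h :: (l ++ [x]), ∃ a ∈ S, a ∉ h :: (l ++ [x]) ∧ G.Adj v a)
    (f : V → Fin D) (hf : ProperOn G (S \ (h :: (l ++ [x])).toFinset) f) :
    ∃ ψ : V → Fin D, ProperOn G S ψ := by
  set C := h :: (l ++ [x]) with hC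
  obtain ⟨m₁, u, m₂, hm, ⟨a, haS, haC, hua⟩, hm₁⟩ :=
    List.exists_split_first (fun v => ∃ a ∈ S, a ∉ C ∧ G.Adj v a) hout
  have hm₁ne : m₁ ≠ [] := by
    rintro rfl
    have : h = u := by
      rw [hC] at hm
      simpa using congrArg List.head? hm
    subst this
    exact haC (hh a haS hua)
  obtain ⟨m, w, rfl⟩ : ∃ m w, m₁ = m ++ [w] :=
    ⟨_, _, (List.dropLast_append_getLast hm₁ne).symm⟩
  have hmC : C = m ++ w :: u :: m₂ := by rw [hm]; simp
  have hwu : G.Adj w u := by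
    rw [hmC, List.isChain_append_cons_cons] at hchain
    exact hchain.2.1
  have hnd := hnodup
  rw [hmC] at hnd
  have hwC : w ∈ C := by rw [hmC]; simp
  have huC : u ∈ C := by rw [hmC]; simp
  have hwno : ∀ b ∈ S, b ∉ C → ¬ G.Adj w b := fun b hb hbC hwb =>
    hm₁ w (by simp) ⟨b, hb, hbC, hwb⟩
  have hchain' : ((u :: m₂) ++ m).IsChain G.Adj := by
    rw [List.isChain_append]
    have hc2 := hchain
    rw [hmC, List.isChain_append_cons_cons] at hc2
    refine ⟨hc2.2.2, ?_, ?_⟩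
    · have := hchain
      rw [hmC, List.isChain_append] at this
      exact this.1
    · intro y hy z hz
      have hyx : y = x := by
        have h1 : C.getLast? = some x := by
          rw [hC, ← List.cons_append, List.getLast?_concat]
        have h2 : C.getLast? = (u :: m₂).getLast? := by
          rw [hmC]; simp [List.getLast?_append, List.getLast?_cons]
        rw [Option.mem_def, ← h2, h1] at hy
        simpa using hy.symm
      have hzh : z = h := by
        cases m with
        | nil => simp at hz
        | cons z' m' =>
          have h1 := congrArg List.head? hmC
          rw [hC] at h1
          simp at h1 hz
          rw [← hz, h1]
      rw [hyx, hzh]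
      exact hhx.symm
  have hmem : ∀ y, y ∈ (u :: m₂) ++ m ↔ y ∈ C.toFinset.erase w := by
    intro y
    have hwn : w ∉ u :: m₂ ∧ w ∉ m := by
      have := List.nodup_append.1 hnd
      refine ⟨(List.nodup_cons.1 this.2.1).1, fun hw => this.2.2 w hw w (by simp) rfl⟩
    rw [Finset.mem_erase, List.mem_toFinset, hmC]
    simp only [List.mem_append, List.mem_cons] at hwn ⊢
    constructor
    · intro hy
      refine ⟨?_, by tauto⟩
      rintro rfl
      tauto
    · tauto
  have hunion : insert w (S \ C.toFinset) ∪ C.toFinset.erase w = S := by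
    ext y
    simp only [Finset.mem_union, Finset.mem_insert, Finset.mem_sdiff, List.mem_toFinset,
      Finset.mem_erase]
    constructor
    · rintro ((rfl | hy) | hy)
      · exact hsub _ hwC
      · exact hy.1
      · exact hsub _ hy.2
    · intro hy
      by_cases y = w <;> by_cases y ∈ C <;> tauto
  have haw : a ≠ w := fun he => haC (he ▸ hwC)
  obtain ⟨ψ, hψ⟩ := exists_properOn_of_connected G D (insert w (S \ C.toFinset))
    (C.toFinset.erase w) (by
      rw [Finset.disjoint_left]
      intro y hy hy'
      simp at hy hy'
      tauto) (by
      intro y hy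
      rw [hunion]
      exact hdeg y (hsub y (by simpa using (Finset.mem_erase.1 hy).2)))
    (Function.update f w (f a)) (by
      have hne : ∀ y ∈ S \ C.toFinset, y ≠ w := by
        rintro y hy rfl
        simp [hwC] at hy
      have hnadj : ∀ y ∈ S \ C.toFinset, ¬ G.Adj w y := by
        intro y hy
        simp only [Finset.mem_sdiff, List.mem_toFinset] at hy
        exact hwno y hy.1 hy.2
      intro y hy z hz hyz
      rw [Finset.mem_insert] at hy hz
      rcases hy with rfl | hy <;> rcases hz with rfl | hz
      · exact absurd hyz (G.loopless.irrefl _)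
      · exact absurd hyz (hnadj z hz)
      · exact absurd hyz.symm (hnadj y hy)
      · rw [Function.update_of_ne (hne y hy), Function.update_of_ne (hne z hz)]
        exact hf y hy z hz hyz)
    (y := u) (a := a) (b := w) ((hmem u).1 (by simp)) (by
      intro Λ hu hcl z hz
      exact forall_mem_of_isChain hchain' (fun y hy => hcl y ((hmem y).1 hy)) ⟨u, by simp, hu⟩ z
        ((hmem z).2 hz)) (by simp [haS, haC]) (by simp) haw hua hwu.symm
      (by rw [Function.update_self, Function.update_of_ne haw])
  rw [hunion] at hψ
  exact ⟨ψ, hψ⟩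

open scoped Classical in
/-- **Brooks' theorem**, for induced subgraphs. -/
theorem exists_properOn_of_cliqueFree {V : Type*} [Fintype V] (G : SimpleGraph V) (D : ℕ)
    (hD : 3 ≤ D) (hdeg : ∀ v, (nbrIn G v Finset.univ).card ≤ D) (hfree : G.CliqueFree (D + 1))
    (S : Finset V) : ∃ f : V → Fin D, ProperOn G S f := by
  induction S using Finset.strongInduction with
  | H S ih =>
  have hdegS : ∀ v, (nbrIn G v S).card ≤ D := fun v =>
    (Finset.card_le_card (nbrIn_mono (Finset.subset_univ _))).trans (hdeg v)
  by_cases hlow : ∃ v ∈ S, (nbrIn G v S).card < D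
  · obtain ⟨v, hv, hvD⟩ := hlow
    obtain ⟨f, hf⟩ := ih (S.erase v) (Finset.erase_ssubset hv)
    have hun : S.erase v ∪ {v} = S := by
      ext y
      by_cases hy : y = v
      · simp [hy, hv]
      · simp [hy]
    obtain ⟨Λ, hΛ, h1, -, h3⟩ := exists_pinned_closure G D (S.erase v) {v} (by simp)
      (fun y _ => by rw [hun]; exact hdegS y) f
    have hvΛ : v ∈ Λ := by
      apply h1 v (by simp)
      have e1 : (nbrIn G v {v}).card = 0 := by
        rw [Finset.card_eq_zero, Finset.eq_empty_iff_forall_notMem]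
        intro y hy
        rw [mem_nbrIn, Finset.mem_singleton] at hy
        exact G.loopless.irrefl _ (hy.1 ▸ hy.2)
      rw [e1, add_zero]
      exact lt_of_le_of_lt (Finset.card_image_le.trans
        (Finset.card_le_card (nbrIn_mono (Finset.erase_subset _ _)))) hvD
    obtain ⟨ψ, -, hψ⟩ := h3 f (fun _ _ => rfl) (hf.mono (by
      intro y hy
      rw [hun, Finset.mem_sdiff] at hy
      exact Finset.mem_erase.2 ⟨fun h => hy.2 (h ▸ hvΛ), hy.1⟩))
    rw [hun] at hψ
    exact ⟨ψ, hψ⟩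
  push Not at hlow
  rcases S.eq_empty_or_nonempty with rfl | ⟨v2, hv2⟩
  · exact ⟨fun _ => ⟨0, by omega⟩, fun u hu => by simp at hu⟩
  obtain ⟨v1, hv1, v3, hv3, hne, hnadj⟩ : ∃ v1 ∈ nbrIn G v2 S, ∃ v3 ∈ nbrIn G v2 S,
      v1 ≠ v3 ∧ ¬ G.Adj v1 v3 := by
    by_contra hcon
    push Not at hcon
    have hv2n : v2 ∉ nbrIn G v2 S := fun h => G.loopless.irrefl _ (mem_nbrIn.1 h).2
    refine hfree (insert v2 (nbrIn G v2 S)) ⟨?_, ?_⟩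
    · rw [SimpleGraph.isClique_iff, Finset.coe_insert]
      intro a ha b hb hab
      rcases Set.mem_insert_iff.1 ha with rfl | ha <;>
        rcases Set.mem_insert_iff.1 hb with rfl | hb
      · exact absurd rfl hab
      · exact (mem_nbrIn.1 hb).2
      · exact (mem_nbrIn.1 ha).2.symm
      · exact hcon a ha b hb hab
    · rw [Finset.card_insert_of_notMem hv2n, le_antisymm (hdegS v2) (hlow v2 hv2)]
  rw [mem_nbrIn] at hv1 hv3
  let P : List V → Prop := fun q =>
    (q ++ [v3, v2, v1]).Nodup ∧ (q ++ [v3, v2, v1]).IsChain G.Adj ∧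
      ∀ v ∈ q ++ [v3, v2, v1], v ∈ S
  have hP0 : P [] := by
    refine ⟨?_, ?_, ?_⟩
    · simp [hne.symm, hv3.2.ne', hv1.2.ne]
    · simp [hv3.2.symm, hv1.2]
    · simp [hv1.1, hv2, hv3.1]
  obtain ⟨q, ⟨hnd, hch, hsub⟩, hmax⟩ : ∃ q, P q ∧ ∀ a, ¬ P (a :: q) := by
    by_contra hcon
    push Not at hcon
    have : ∀ n, ∃ q, P q ∧ q.length = n := by
      intro n
      induction n with
      | zero => exact ⟨[], hP0, rfl⟩
      | succ n ihn =>
        obtain ⟨q, hq, hn⟩ := ihn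
        obtain ⟨a, ha⟩ := hcon q hq
        exact ⟨a :: q, ha, by simp [hn]⟩
    obtain ⟨q, hq, hn⟩ := this (Fintype.card V + 1)
    have := (List.nodup_append.1 hq.1).1.length_le_card
    omega
  obtain ⟨h, rest, hrest⟩ : ∃ h rest, q ++ [v3, v2, v1] = h :: rest := by
    cases q with
    | nil => exact ⟨_, _, rfl⟩
    | cons a q => exact ⟨_, _, rfl⟩
  have hhS : h ∈ S := hsub h (by rw [hrest]; simp)
  have hhl : ∀ a ∈ S, G.Adj h a → a ∈ rest := by
    intro a ha hha
    by_contra hn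
    refine hmax a ⟨?_, ?_, ?_⟩
    · rw [List.cons_append, hrest, List.nodup_cons]
      exact ⟨by simp [hn, hha.ne'], hrest ▸ hnd⟩
    · rw [List.cons_append, hrest, List.isChain_cons_cons]
      exact ⟨hha.symm, hrest ▸ hch⟩
    · intro v hv
      rw [List.cons_append, List.mem_cons] at hv
      rcases hv with rfl | hv
      · exact ha
      · exact hsub v hv
  obtain ⟨a0, ha0⟩ : (nbrIn G h S).Nonempty := by
    rw [← Finset.card_pos]
    have := hlow h hhS
    omega
  rw [mem_nbrIn] at ha0
  obtain ⟨l, x, l₂, hl, ⟨hxS, hhx⟩, hl₂⟩ := List.exists_split_last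
    (fun a => a ∈ S ∧ G.Adj h a) (l := rest) ⟨a0, hhl a0 ha0.1 ha0.2, ha0⟩
  have hfull : q ++ [v3, v2, v1] = (h :: (l ++ [x])) ++ l₂ := by rw [hrest, hl]; simp
  have hndC : (h :: (l ++ [x])).Nodup := by
    rw [hfull] at hnd
    exact (List.nodup_append.1 hnd).1
  have hchC : (h :: (l ++ [x])).IsChain G.Adj := by
    rw [hfull] at hch
    exact (List.isChain_append.1 hch).1
  have hsubC : ∀ v ∈ h :: (l ++ [x]), v ∈ S := fun v hv =>
    hsub v (by rw [hfull]; exact List.mem_append_left _ hv)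
  have hhC : ∀ a ∈ S, G.Adj h a → a ∈ h :: (l ++ [x]) := by
    intro a ha hha
    have := hhl a ha hha
    rw [hl] at this
    simp only [List.mem_append, List.mem_cons] at this ⊢
    rcases this with h1 | rfl | h1
    · simp [h1]
    · simp
    · exact absurd ⟨ha, hha⟩ (hl₂ a h1)
  by_cases hout : ∃ v ∈ h :: (l ++ [x]), ∃ a ∈ S, a ∉ h :: (l ++ [x]) ∧ G.Adj v a
  · obtain ⟨f, hf⟩ := ih (S \ (h :: (l ++ [x])).toFinset)
      (Finset.sdiff_ssubset (fun v hv => hsubC v (List.mem_toFinset.1 hv)) ⟨h, by simp⟩)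
    exact exists_properOn_of_cycle G D S (fun v _ => hdegS v) hndC hchC hhx hsubC hhC hout f hf
  by_cases hcov : (h :: (l ++ [x])).toFinset = S
  swap
  · have hss : (h :: (l ++ [x])).toFinset ⊂ S :=
      Finset.ssubset_iff_subset_ne.2 ⟨fun v hv => hsubC v (List.mem_toFinset.1 hv), hcov⟩
    obtain ⟨f, hf⟩ := ih _ hss
    obtain ⟨g, hg⟩ := ih (S \ (h :: (l ++ [x])).toFinset)
      (Finset.sdiff_ssubset hss.1 ⟨h, by simp⟩)
    push Not at hout
    refine ⟨fun v => if v ∈ h :: (l ++ [x]) then f v else g v, ?_⟩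
    intro u hu v hv huv
    by_cases hu' : u ∈ h :: (l ++ [x]) <;> by_cases hv' : v ∈ h :: (l ++ [x])
    · simp only [hu', hv', if_true]
      exact hf u (List.mem_toFinset.2 hu') v (List.mem_toFinset.2 hv') huv
    · exact absurd huv (hout u hu' v hv hv')
    · exact absurd huv.symm (hout v hv' u hu hu')
    · simp only [hu', hv', if_false]
      exact hg u (by rw [Finset.mem_sdiff, List.mem_toFinset]; exact ⟨hu, hu'⟩) v
        (by rw [Finset.mem_sdiff, List.mem_toFinset]; exact ⟨hv, hv'⟩) huv
  have hSl : ∀ v, v ∈ S ↔ v ∈ q ++ [v3, v2, v1] := by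
    refine fun v => ⟨fun hv => ?_, hsub v⟩
    rw [hfull, List.mem_append]
    left
    rw [← hcov] at hv
    exact List.mem_toFinset.1 hv
  obtain ⟨z, hzq, hz⟩ : ∃ z ∈ q, G.Adj v2 z := by
    have : ¬ nbrIn G v2 S ⊆ {v1, v3} := by
      intro hs
      have h1 := Finset.card_le_card hs
      have h2 := hlow v2 hv2
      have h3 := Finset.card_le_two (a := v1) (b := v3)
      omega
    rw [Finset.not_subset] at this
    obtain ⟨z, hz, hz'⟩ := this
    rw [mem_nbrIn, hSl] at hz
    have hzv2 := hz.2.ne'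
    simp at hz' hz
    exact ⟨z, by tauto, hz.2⟩
  have hndq := List.nodup_append.1 hnd
  have hq1 : ∀ y ∈ q, y ≠ v1 ∧ y ≠ v2 ∧ y ≠ v3 := fun y hy =>
    ⟨hndq.2.2 y hy v1 (by simp), hndq.2.2 y hy v2 (by simp), hndq.2.2 y hy v3 (by simp)⟩
  have hunion : {v1, v3} ∪ S \ {v1, v3} = S := by
    apply Finset.union_sdiff_of_subset
    intro y
    simp only [Finset.mem_insert, Finset.mem_singleton]
    rintro (rfl | rfl)
    · exact hv1.1
    · exact hv3.1
  obtain ⟨ψ, hψ⟩ := exists_properOn_of_connected G D {v1, v3} (S \ {v1, v3})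
    Finset.disjoint_sdiff (fun y _ => by rw [hunion]; exact hdegS y) (fun _ => ⟨0, by omega⟩) (by
      intro a ha b hb hab
      exfalso
      simp only [Finset.mem_insert, Finset.mem_singleton] at ha hb
      rcases ha with rfl | rfl <;> rcases hb with rfl | rfl
      · exact G.loopless.irrefl _ hab
      · exact hnadj hab
      · exact hnadj hab.symm
      · exact G.loopless.irrefl _ hab)
    (y := v2) (a := v1) (b := v3) (by simp [hv2, hv1.2.ne, hv3.2.ne]) (by
      intro Λ hv2Λ hcl u hu
      have hqS : ∀ y ∈ q, y ∈ S \ {v1, v3} := by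
        intro y hy
        have := hq1 y hy
        simp [this, hSl, hy]
      have hzΛ : z ∈ Λ := hcl z (hqS z hzq) v2 hv2Λ hz.symm
      have hq := forall_mem_of_isChain (l := q) (Λ := Λ) (List.isChain_append.1 hch).1
        (fun y hy => hcl y (hqS y hy)) ⟨z, hzq, hzΛ⟩
      simp [hSl] at hu
      rcases hu with ⟨h1 | rfl | rfl | rfl, h2⟩
      · exact hq u h1
      · simp at h2
      · exact hv2Λ
      · simp at h2)
    (by simp) (by simp) hne hv1.2 hv3.2 rfl
  rw [hunion] at hψ
  exact ⟨ψ, hψ⟩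

/-- The graph `F` with all edges at `T` removed. -/
def restGraph {V : Type*} (F : SimpleGraph V) (T : Finset V) : SimpleGraph V where
  Adj u v := F.Adj u v ∧ u ∉ T ∧ v ∉ T
  symm := ⟨fun _ _ h => ⟨h.1.symm, h.2.2, h.2.1⟩⟩
  loopless := ⟨fun _ h => F.loopless.irrefl _ h.1⟩

/-- A representative of the component of `r` in `F - T`. -/
noncomputable def compRep {V : Type*} (F : SimpleGraph V) (T : Finset V) (r : V) : V :=
  Quot.out ((restGraph F T).connectedComponentMk r)

theorem compRep_eq_of_adj {V : Type*} {F : SimpleGraph V} {T : Finset V} {u v : V}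
    (h : F.Adj u v) (hu : u ∉ T) (hv : v ∉ T) : compRep F T u = compRep F T v := by
  unfold compRep
  rw [SimpleGraph.ConnectedComponent.connectedComponentMk_eq_of_adj
    (show (restGraph F T).Adj u v from ⟨h, hu, hv⟩)]

theorem mem_of_compRep_eq {V : Type*} {F : SimpleGraph V} {T : Finset V} {Λ : Set V}
    (hΛ : ∀ u v, u ∉ T → v ∉ T → F.Adj u v → v ∈ Λ → u ∈ Λ) {u v : V}
    (h : compRep F T u = compRep F T v) (hv : v ∈ Λ) : u ∈ Λ := by
  have h' : (restGraph F T).connectedComponentMk u = (restGraph F T).connectedComponentMk v := by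
    have := congrArg (restGraph F T).connectedComponentMk h
    unfold compRep at this
    have key : ∀ C : (restGraph F T).ConnectedComponent,
        (restGraph F T).connectedComponentMk (Quot.out C) = C := fun C => Quot.out_eq C
    rwa [key, key] at this
  obtain ⟨p⟩ := SimpleGraph.ConnectedComponent.exact h'
  induction p with
  | nil => exact hv
  | cons hadj p ih => exact hΛ _ _ hadj.2.1 hadj.2.2 hadj.1 (ih (by
      unfold compRep
      rw [SimpleGraph.ConnectedComponent.sound ⟨p⟩]) hv (SimpleGraph.ConnectedComponent.sound ⟨p⟩))

open scoped Classical in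
/-- The component of `F - T` represented by `C`. -/
noncomputable def compSet {V : Type*} [Fintype V] (F : SimpleGraph V) (T : Finset V) (C : V) :
    Finset V :=
  Finset.univ.filter fun r => r ∉ T ∧ compRep F T r = C

theorem mem_compSet {V : Type*} [Fintype V] {F : SimpleGraph V} {T : Finset V} {C r : V} :
    r ∈ compSet F T C ↔ r ∉ T ∧ compRep F T r = C := by
  simp [compSet]

open scoped Classical in
/-- The vertices of `T` adjacent to the component represented by `C`. -/
noncomputable def attach {V : Type*} [Fintype V] (F : SimpleGraph V) (T : Finset V) (C : V) :
    Finset V :=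
  T.filter fun t => ∃ r ∈ compSet F T C, F.Adj t r

theorem mem_attach {V : Type*} [Fintype V] {F : SimpleGraph V} {T : Finset V} {C t : V} :
    t ∈ attach F T C ↔ t ∈ T ∧ ∃ r ∈ compSet F T C, F.Adj t r := by
  simp [attach]

/-- The colouring `z` of `T` extends to the component represented by `C`. -/
def Compat {V : Type*} [Fintype V] (F : SimpleGraph V) (T : Finset V) {K : ℕ} (C : V)
    (z : V → Fin K) : Prop :=
  ∃ φ : V → Fin K, ProperOn F (compSet F T C) φ ∧
    ∀ r ∈ compSet F T C, ∀ t ∈ attach F T C, F.Adj t r → φ r ≠ z t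

theorem Compat.congr {V : Type*} [Fintype V] {F : SimpleGraph V} {T : Finset V} {K : ℕ} {C : V}
    {z w : V → Fin K} (h : Compat F T C z) (he : ∀ t ∈ attach F T C, w t = z t) :
    Compat F T C w := by
  obtain ⟨φ, h1, h2⟩ := h
  exact ⟨φ, h1, fun r hr t ht htr => by rw [he t ht]; exact h2 r hr t ht htr⟩

theorem compat_of_properOn {V : Type*} [Fintype V] {F : SimpleGraph V} {T : Finset V} {K : ℕ}
    (C : V) {h : V → Fin K} (hh : ProperOn F Finset.univ h) : Compat F T C h :=
  ⟨h, hh.mono (Finset.subset_univ _), fun _ _ _ _ htr =>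
    hh _ (Finset.mem_univ _) _ (Finset.mem_univ _) htr.symm⟩

open scoped Classical in
theorem exists_extension_of_compat {V : Type*} [Fintype V] {F : SimpleGraph V} {T : Finset V}
    {K : ℕ} (hdeg : ∀ v, (nbrIn F v Finset.univ).card ≤ K)
    (hT : ∀ x ∈ T, (nbrIn F x Finset.univ).card < K) {A : Finset V} (hA : A ⊆ T)
    {z : V → Fin K} (hz : ProperOn F A z) (hcompat : ∀ C, attach F T C ⊆ A → Compat F T C z) :
    ∃ h : V → Fin K, ProperOn F Finset.univ h ∧ ∀ a ∈ A, h a = z a := by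
  have hun : A ∪ Finset.univ \ A = Finset.univ := by simp
  obtain ⟨Λ, hΛ, h1, h2, h3⟩ := exists_pinned_closure F K A (Finset.univ \ A)
    Finset.disjoint_sdiff (fun y _ => by rw [hun]; exact hdeg y) z
  have hTΛ : ∀ t ∈ T, t ∉ A → t ∈ Λ := by
    intro t ht htA
    refine h1 t (by simp [htA]) (lt_of_le_of_lt ?_ (hT t ht))
    have hsplit : (nbrIn F t (A ∪ Finset.univ \ A)).card =
        (nbrIn F t A).card + (nbrIn F t (Finset.univ \ A)).card := by
      unfold nbrIn
      rw [Finset.filter_union, Finset.card_union_of_disjoint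
        (Finset.disjoint_filter_filter Finset.disjoint_sdiff)]
    rw [hun] at hsplit
    rw [hsplit]
    exact Nat.add_le_add_right Finset.card_image_le _
  have hout : ∀ u, u ∉ Λ → u ∉ A → u ∉ T ∧ attach F T (compRep F T u) ⊆ A := by
    intro u hu huA
    have huT : u ∉ T := fun huT => hu (hTΛ u huT huA)
    refine ⟨huT, fun t ht => ?_⟩
    rw [mem_attach] at ht
    obtain ⟨htT, r, hr, htr⟩ := ht
    by_contra htA
    rw [mem_compSet] at hr
    have hrA : r ∉ A := fun h => hr.1 (hA h)
    have hrΛ : r ∈ Λ := h2 r (by simp [hrA]) t (hTΛ t htT htA) htr.symm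
    refine hu (mem_of_compRep_eq (Λ := (Λ : Set V)) ?_ hr.2.symm hrΛ)
    intro a b ha _ hab hb
    exact h2 a (by simp; exact fun h => ha (hA h)) b hb hab
  have : Nonempty (V → Fin K) := ⟨z⟩
  choose! φ hφ1 hφ2 using hcompat
  obtain ⟨h, hh, hproper⟩ := h3 (fun u => if u ∈ A then z u else φ (compRep F T u) u)
    (fun u hu => by simp [hu]) (by
      have hmix : ∀ u v, u ∈ A → v ∉ A → v ∉ Λ → F.Adj u v →
          z u ≠ φ (compRep F T v) v := by
        intro u v hu hv hvΛ huv
        obtain ⟨hvT, hatt⟩ := hout v hvΛ hv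
        have hvC : v ∈ compSet F T (compRep F T v) := mem_compSet.2 ⟨hvT, rfl⟩
        exact (hφ2 _ hatt v hvC u (mem_attach.2 ⟨hA hu, v, hvC, huv⟩) huv).symm
      intro u hu v hv huv
      rw [Finset.mem_sdiff] at hu hv
      by_cases huA : u ∈ A <;> by_cases hvA : v ∈ A
      · simp only [huA, hvA, if_true]
        exact hz u huA v hvA huv
      · simp only [huA, hvA, if_true, if_false]
        exact hmix u v huA hvA hv.2 huv
      · simp only [huA, hvA, if_true, if_false]
        exact (hmix v u hvA huA hu.2 huv.symm).symm
      · simp only [huA, hvA, if_false]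
        obtain ⟨huT, hattu⟩ := hout u hu.2 huA
        obtain ⟨hvT, hattv⟩ := hout v hv.2 hvA
        have he := compRep_eq_of_adj huv huT hvT
        rw [← he]
        exact hφ1 _ hattu u (mem_compSet.2 ⟨huT, rfl⟩) v (mem_compSet.2 ⟨hvT, he.symm⟩) huv)
  rw [hun] at hproper
  refine ⟨h, hproper, fun a ha => ?_⟩
  rw [hh a fun h => by simpa [ha] using hΛ h]
  simp [ha]

open scoped Classical in
theorem card_not_compat_le_card_nbrIn {V : Type*} [Fintype V] {F : SimpleGraph V} {T : Finset V}
    {K : ℕ} (hdeg : ∀ v, (nbrIn F v Finset.univ).card ≤ K) {C b : V} (hb : b ∈ attach F T C)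
    (z : V → Fin K) :
    (Finset.univ.filter fun γ => ¬ Compat F T C (Function.update z b γ)).card ≤
      (nbrIn F b (compSet F T C)).card := by
  rw [mem_attach] at hb
  obtain ⟨hbT, r₀, hr₀, hbr₀⟩ := hb
  let L : V → Finset (Fin K) := fun r => Finset.univ \ (nbrIn F r (T.erase b)).image z
  have hdisj : Disjoint (T.erase b) (compSet F T C) := by
    rw [Finset.disjoint_left]
    intro x hx hx'
    exact (mem_compSet.1 hx').1 (Finset.mem_of_mem_erase hx)
  have hLc : ∀ r, K ≤ (L r).card + (nbrIn F r (T.erase b)).card := by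
    intro r
    have h1 : (L r).card = K - ((nbrIn F r (T.erase b)).image z).card := by
      rw [Finset.card_sdiff_of_subset (Finset.subset_univ _)]
      simp
    have h2 := Finset.card_image_le (s := nbrIn F r (T.erase b)) (f := z)
    omega
  have hsplit : ∀ r, (nbrIn F r (T.erase b)).card + (nbrIn F r (compSet F T C)).card =
      (nbrIn F r (T.erase b ∪ compSet F T C)).card := by
    intro r
    unfold nbrIn
    rw [Finset.filter_union, Finset.card_union_of_disjoint
        (Finset.disjoint_filter_filter hdisj)]
  obtain ⟨Λ, hΛ, h1, h2, h3⟩ := exists_greedy_closure F L (compSet F T C) (by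
    intro r _
    have := (Finset.card_le_card (nbrIn_mono (F := F) (x := r)
      (Finset.subset_univ (T.erase b ∪ compSet F T C)))).trans (hdeg r)
    have := hsplit r
    have := hLc r
    omega)
  have hr₀Λ : r₀ ∈ Λ := by
    apply h1 r₀ hr₀
    have h4 : (nbrIn F r₀ (T.erase b ∪ compSet F T C)).card <
        (nbrIn F r₀ Finset.univ).card := by
      apply Finset.card_lt_card
      refine Finset.ssubset_iff_subset_ne.2 ⟨nbrIn_mono (Finset.subset_univ _), fun he => ?_⟩
      have : b ∈ nbrIn F r₀ Finset.univ := mem_nbrIn.2 ⟨Finset.mem_univ _, hbr₀.symm⟩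
      rw [← he, mem_nbrIn, Finset.mem_union, mem_compSet] at this
      simp [hbT] at this
    have := hsplit r₀
    have := hLc r₀
    have := hdeg r₀
    omega
  have hall : ∀ r ∈ compSet F T C, r ∈ Λ := by
    intro r hr
    have := mem_of_compRep_eq (F := F) (T := T) (Λ := {x | x ∈ compSet F T C → x ∈ Λ}) ?_
      (((mem_compSet.1 hr).2).trans (mem_compSet.1 hr₀).2.symm) (fun _ => hr₀Λ)
    · exact this hr
    · intro u v hu hv huv hvm huC
      have hvC : v ∈ compSet F T C :=
        mem_compSet.2 ⟨hv, by rw [← compRep_eq_of_adj huv hu hv]; exact (mem_compSet.1 huC).2⟩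
      exact h2 u huC v (hvm hvC) huv
  obtain ⟨ψ, -, hψ1, hψ2⟩ := h3 z ⟨fun u hu => by
    rw [Finset.mem_sdiff] at hu; exact absurd (hall u hu.1) hu.2, fun u hu => by
    rw [Finset.mem_sdiff] at hu; exact absurd (hall u hu.1) hu.2⟩
  refine (Finset.card_le_card (t := (nbrIn F b (compSet F T C)).image ψ) ?_).trans
    Finset.card_image_le
  intro γ hγ
  rw [Finset.mem_filter] at hγ
  by_contra hn
  refine hγ.2 ⟨ψ, hψ2, fun r hr t ht htr => ?_⟩
  by_cases htb : t = b
  · subst htb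
    rw [Function.update_self]
    rintro rfl
    exact hn (Finset.mem_image.2 ⟨r, mem_nbrIn.2 ⟨hr, htr⟩, rfl⟩)
  · rw [Function.update_of_ne htb]
    intro he
    have := hψ1 r hr
    simp only [L, Finset.mem_sdiff, Finset.mem_univ, true_and, Finset.mem_image, mem_nbrIn,
      Finset.mem_erase] at this
    exact this ⟨t, ⟨⟨htb, (mem_attach.1 ht).1⟩, htr.symm⟩, he.symm⟩

open scoped Classical in
theorem sum_card_nbrIn_comm {V : Type*} (F : SimpleGraph V) (R Y : Finset V) :
    ∑ r ∈ R, (nbrIn F r Y).card = ∑ y ∈ Y, (nbrIn F y R).card := by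
  simp only [nbrIn, Finset.card_filter]
  rw [Finset.sum_comm]
  simp only [F.adj_comm]

theorem exists_perm_of_injective {α β : Type*} [Fintype α] {i j : β → α}
    (hi : Function.Injective i) (hj : Function.Injective j) :
    ∃ π : Equiv.Perm α, ∀ b, π (i b) = j b := by
  classical
  refine ⟨Equiv.extendSubtype (p := (· ∈ Set.range i)) (q := (· ∈ Set.range j))
    ((Equiv.ofInjective i hi).symm.trans (Equiv.ofInjective j hj)), fun b => ?_⟩
  rw [Equiv.extendSubtype_apply_of_mem _ _ ⟨b, rfl⟩]
  simp

open scoped Classical in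
theorem compat_of_lt {V : Type*} [Fintype V] {F : SimpleGraph V} {T : Finset V}
    {K : ℕ} {ψ : V → Fin K} (hψ : ProperOn F Finset.univ ψ)
    {C b : V} {Tr : Finset V} (hbTr : b ∉ Tr) (hatt : attach F T C ⊆ insert b Tr)
    {z : V → Fin K} {γ : Fin K} (hγ : γ ∉ (Tr ∩ attach F T C).image z)
    (hlt : ∑ r ∈ compSet F T C, (nbrIn F r Tr).card + 1 < K) :
    Compat F T C (Function.update z b γ) := by
  set Γ := (Tr ∩ attach F T C).image z with hΓ
  let M : Fin K → Finset V := fun α =>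
    (compSet F T C).filter fun r => ∃ y ∈ Tr, F.Adj y r ∧ z y = α
  let t : Γ → Finset (Fin K) := fun α => (Finset.univ.erase (ψ b)) \ (M α).image ψ
  have hM : ∀ s : Finset (Fin K), ∑ α ∈ s, (M α).card ≤
      ∑ r ∈ compSet F T C, (nbrIn F r Tr).card := by
    intro s
    have h1 : ∀ α, (M α).card = ∑ r ∈ compSet F T C,
        if ∃ y ∈ Tr, F.Adj y r ∧ z y = α then 1 else 0 := fun α => Finset.card_filter _ _
    simp only [h1]
    rw [Finset.sum_comm]
    refine Finset.sum_le_sum fun r _ => ?_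
    rw [← Finset.card_filter]
    refine (Finset.card_le_card (t := (nbrIn F r Tr).image z) ?_).trans Finset.card_image_le
    intro α hα
    obtain ⟨-, y, hy, hyr, rfl⟩ := Finset.mem_filter.1 hα
    exact Finset.mem_image_of_mem _ (mem_nbrIn.2 ⟨hy, hyr.symm⟩)
  obtain ⟨κ, hκ, hκt⟩ := (Finset.all_card_le_biUnion_card_iff_exists_injective t).1 (by
    intro s
    by_contra hcon
    push Not at hcon
    have hs0 : 0 < s.card := by omega
    have hsK : s.card + 1 ≤ K := by
      have h1 : s.card ≤ Γ.card := by simpa using Finset.card_le_univ s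
      have h2 : Γ.card < (Finset.univ : Finset (Fin K)).card :=
        Finset.card_lt_card ((Finset.ssubset_univ_iff).2 fun h => hγ (h ▸ Finset.mem_univ γ))
      rw [Finset.card_univ, Fintype.card_fin] at h2
      omega
    have hMs : ∀ α ∈ s, K - s.card ≤ (M α).card := by
      intro α hα
      have h1 : Finset.univ.erase (ψ b) ⊆ s.biUnion t ∪ (M α).image ψ := by
        intro x hx
        by_cases hxM : x ∈ (M α).image ψ
        · exact Finset.mem_union_right _ hxM
        · exact Finset.mem_union_left _ (Finset.mem_biUnion.2 ⟨α, hα, Finset.mem_sdiff.2 ⟨hx, hxM⟩⟩)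
      have h2 := (Finset.card_le_card h1).trans (Finset.card_union_le _ _)
      rw [Finset.card_erase_of_mem (Finset.mem_univ _), Finset.card_univ, Fintype.card_fin] at h2
      have h3 := Finset.card_image_le (s := M α) (f := ψ)
      omega
    have h4 : s.card * (K - s.card) ≤ ∑ α ∈ s, (M α).card := by
      rw [← smul_eq_mul]
      exact Finset.card_nsmul_le_sum _ _ _ hMs
    have h5 : ∑ α ∈ s, (M α).card ≤ ∑ r ∈ compSet F T C, (nbrIn F r Tr).card := by
      have := hM (s.map (Function.Embedding.subtype _))
      rwa [Finset.sum_map] at this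
    have h6 : K - 1 ≤ s.card * (K - s.card) := by
      obtain ⟨a, ha⟩ := Nat.exists_eq_add_of_le hsK
      have : K - s.card = a + 1 := by omega
      rw [this]
      obtain ⟨s', hs'⟩ := Nat.exists_eq_add_of_le hs0
      have : K - 1 = s.card + a := by omega
      rw [this, hs']
      nlinarith [Nat.zero_le (s' * a)]
    omega)
  have hκ' : ∀ α : Γ, κ α ≠ ψ b ∧ κ α ∉ (M α).image ψ := by
    intro α
    have := hκt α
    simp only [t, Finset.mem_sdiff, Finset.mem_erase] at this
    exact ⟨this.1.1, this.2⟩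
  obtain ⟨π, hπ⟩ := exists_perm_of_injective
    (i := fun o : Option Γ => o.elim (ψ b) κ) (j := fun o : Option Γ => o.elim γ Subtype.val)
    (by
      rintro (_ | α) (_ | β) h
      · rfl
      · exact absurd h.symm (hκ' β).1
      · exact absurd h (hκ' α).1
      · exact congrArg some (hκ h))
    (by
      rintro (_ | α) (_ | β) h
      · rfl
      · have h : γ = β.1 := h
        exact absurd (h ▸ β.2) hγ
      · have h : α.1 = γ := h
        exact absurd (h ▸ α.2) hγ
      · exact congrArg some (Subtype.ext h))
  refine ⟨fun r => π (ψ r), fun u _ v _ huv h => hψ u (Finset.mem_univ _) v (Finset.mem_univ _) huv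
    (π.injective h), fun r hr y hy hyr => ?_⟩
  by_cases hyb : y = b
  · subst hyb
    rw [Function.update_self]
    intro h
    have h2 : π (ψ y) = γ := hπ none
    rw [← h2] at h
    exact hψ r (Finset.mem_univ _) y (Finset.mem_univ _) hyr.symm (π.injective h)
  · rw [Function.update_of_ne hyb]
    have hyTr : y ∈ Tr := by
      have := hatt hy
      rw [Finset.mem_insert] at this
      exact this.resolve_left hyb
    have hyΓ : z y ∈ Γ := Finset.mem_image_of_mem _ (Finset.mem_inter.2 ⟨hyTr, hy⟩)
    intro h
    have h2 := hπ (some ⟨z y, hyΓ⟩)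
    simp only [Option.elim] at h2
    rw [← h2] at h
    refine (hκ' ⟨z y, hyΓ⟩).2 ?_
    rw [← π.injective h]
    exact Finset.mem_image_of_mem _ (Finset.mem_filter.2 ⟨hr, y, hyTr, hyr, rfl⟩)

open scoped Classical in
theorem card_not_compat_le_sum {V : Type*} [Fintype V] {F : SimpleGraph V} {T : Finset V}
    {K : ℕ} (hdeg : ∀ v, (nbrIn F v Finset.univ).card ≤ K)
    (hT : ∀ x ∈ T, (nbrIn F x Finset.univ).card < K) {ψ : V → Fin K}
    (hψ : ProperOn F Finset.univ ψ) {C b : V} (hb : b ∈ attach F T C) {Tr : Finset V}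
    (hbTr : b ∉ Tr) (hatt : attach F T C ⊆ insert b Tr) (z : V → Fin K) :
    (Finset.univ.filter fun γ => ¬ Compat F T C (Function.update z b γ)).card ≤
      ∑ r ∈ compSet F T C, (nbrIn F r Tr).card := by
  by_cases hlt : ∑ r ∈ compSet F T C, (nbrIn F r Tr).card + 1 < K
  · have h1 : (Finset.univ.filter fun γ => ¬ Compat F T C (Function.update z b γ)) ⊆
        (Tr ∩ attach F T C).image z := by
      intro γ hγ
      by_contra hn
      exact (Finset.mem_filter.1 hγ).2 (compat_of_lt hψ hbTr hatt hn hlt)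
    refine (Finset.card_le_card h1).trans (Finset.card_image_le.trans ?_)
    rw [sum_card_nbrIn_comm, Finset.card_eq_sum_ones]
    refine (Finset.sum_le_sum (g := fun y => (nbrIn F y (compSet F T C)).card) ?_).trans
      (Finset.sum_le_sum_of_subset Finset.inter_subset_left)
    intro y hy
    obtain ⟨-, r, hr, hyr⟩ := mem_attach.1 (Finset.mem_inter.1 hy).2
    exact Finset.card_pos.2 ⟨r, mem_nbrIn.2 ⟨hr, hyr⟩⟩
  · have h1 := card_not_compat_le_card_nbrIn hdeg hb z
    have h2 := Finset.card_le_card (nbrIn_mono (F := F) (x := b)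
      (Finset.subset_univ (compSet F T C)))
    have h3 := hT b (mem_attach.1 hb).1
    omega

open scoped Classical in
theorem sum_sum_compSet {V : Type*} [Fintype V] (F : SimpleGraph V) (T : Finset V) (g : V → ℕ) :
    ∑ C, ∑ r ∈ compSet F T C, g r = ∑ r with r ∉ T, g r := by
  rw [← Finset.sum_fiberwise (Finset.univ.filter fun r => r ∉ T) (compRep F T) g]
  refine Finset.sum_congr rfl fun C _ => Finset.sum_congr ?_ fun _ _ => rfl
  ext r
  simp [mem_compSet]

open scoped Classical in
/-- The number of obstructions within `W` to giving `b` the colour `γ`: neighbours that have this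
colour already, and components to which the colouring would no longer extend. -/
noncomputable def obstructions {V : Type*} [Fintype V] (F : SimpleGraph V) (T : Finset V) {K : ℕ}
    (z : V → Fin K) (b : V) (W : Finset V) (γ : Fin K) : ℕ :=
  ((nbrIn F b W).filter fun y => z y = γ).card +
    (Finset.univ.filter fun C => (b ∈ attach F T C ∧ attach F T C ⊆ insert b W) ∧
      ¬ Compat F T C (Function.update z b γ)).card

open scoped Classical in
theorem sum_obstructions_le {V : Type*} [Fintype V] {F : SimpleGraph V} {T : Finset V} {K : ℕ}
    {z : V → Fin K} {b : V} {W : Finset V} {w : V → ℕ}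
    (hw : ∀ C, b ∈ attach F T C → attach F T C ⊆ insert b W →
      (Finset.univ.filter fun γ => ¬ Compat F T C (Function.update z b γ)).card ≤ w C) :
    ∑ γ, obstructions F T z b W γ ≤ (nbrIn F b W).card +
      ∑ C with b ∈ attach F T C ∧ attach F T C ⊆ insert b W, w C := by
  unfold obstructions
  rw [Finset.sum_add_distrib]
  refine Nat.add_le_add (le_of_eq ?_) ?_
  · exact (Finset.card_eq_sum_card_fiberwise fun _ _ => Finset.mem_coe.2 (Finset.mem_univ _)).symm
  · simp only [← Finset.filter_filter, Finset.card_filter _ (Finset.filter _ _)]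
    rw [Finset.sum_comm]
    refine Finset.sum_le_sum fun C hC => ?_
    rw [← Finset.card_filter]
    exact hw C (Finset.mem_filter.1 (Finset.mem_filter.1 hC).1).2
      (Finset.mem_filter.1 hC).2

open scoped Classical in
theorem exists_of_obstructions_le_one {V : Type*} [Fintype V] {F : SimpleGraph V} {T : Finset V}
    {K : ℕ} {z : V → Fin K} {b : V} {Z Tr : Finset V} {γ : Fin K}
    (h : obstructions F T z b Z γ + obstructions F T z b Tr γ ≤ 1) :
    ∃ X ⊆ Z \ Tr, X.card ≤ 1 ∧ (∀ y ∈ Z \ X, F.Adj b y → z y ≠ γ) ∧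
      ∀ C, b ∈ attach F T C → attach F T C ⊆ insert b (Z \ X) →
        Compat F T C (Function.update z b γ) := by
  unfold obstructions at h
  set N := (nbrIn F b Z).filter fun y => z y = γ with hN
  set M := Finset.univ.filter fun C => (b ∈ attach F T C ∧ attach F T C ⊆ insert b Z) ∧
      ¬ Compat F T C (Function.update z b γ) with hM
  set N' := (nbrIn F b Tr).filter fun y => z y = γ with hN'
  set M' := Finset.univ.filter fun C => (b ∈ attach F T C ∧ attach F T C ⊆ insert b Tr) ∧
      ¬ Compat F T C (Function.update z b γ) with hM'
  have hNsub : ∀ y, y ∈ N ↔ (y ∈ Z ∧ F.Adj b y) ∧ z y = γ := fun y => by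
    rw [hN, Finset.mem_filter, mem_nbrIn]
  have hMmem : ∀ C, C ∈ M ↔ (b ∈ attach F T C ∧ attach F T C ⊆ insert b Z) ∧
      ¬ Compat F T C (Function.update z b γ) := fun y => by
    rw [hM, Finset.mem_filter]
    simp
  have hmono : ∀ X, insert b (Z \ X) ⊆ insert b Z := fun X =>
    Finset.insert_subset_insert _ Finset.sdiff_subset
  rcases Finset.eq_empty_or_nonempty N with hN0 | ⟨y, hy⟩
  · rcases Finset.eq_empty_or_nonempty M with hM0 | ⟨C₀, hC₀⟩
    · refine ⟨∅, by simp, by simp, ?_, ?_⟩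
      · intro y hy hby hzy
        have := (hNsub y).2 ⟨⟨(Finset.mem_sdiff.1 hy).1, hby⟩, hzy⟩
        simp [hN0] at this
      · intro C hbC hC
        by_contra hn
        have := (hMmem C).2 ⟨⟨hbC, hC.trans (hmono _)⟩, hn⟩
        simp [hM0] at this
    · have hM1 : 0 < M.card := Finset.card_pos.2 ⟨C₀, hC₀⟩
      have hC₀' := (hMmem C₀).1 hC₀
      have hnot : ¬ attach F T C₀ ⊆ insert b Tr := by
        intro hs
        have : 0 < M'.card := Finset.card_pos.2 ⟨C₀, by
          rw [hM', Finset.mem_filter]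
          exact ⟨Finset.mem_univ _, ⟨hC₀'.1.1, hs⟩, hC₀'.2⟩⟩
        omega
      obtain ⟨x, hx, hx'⟩ := Finset.not_subset.1 hnot
      rw [Finset.mem_insert, not_or] at hx'
      have hxZ : x ∈ Z := by
        have := hC₀'.1.2 hx
        rw [Finset.mem_insert] at this
        exact this.resolve_left hx'.1
      refine ⟨{x}, by simp [hxZ, hx'.2], by simp, ?_, ?_⟩
      · intro y hy hby hzy
        have := (hNsub y).2 ⟨⟨(Finset.mem_sdiff.1 hy).1, hby⟩, hzy⟩
        simp [hN0] at this
      · intro C hbC hC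
        by_contra hn
        have h1 := (hMmem C).2 ⟨⟨hbC, hC.trans (hmono _)⟩, hn⟩
        have h2 : C = C₀ := Finset.card_le_one.1 (by omega : M.card ≤ 1) C h1 C₀ hC₀
        subst h2
        have := hC hx
        simp [hx'.1] at this
  · have hN1 : 0 < N.card := Finset.card_pos.2 ⟨y, hy⟩
    have hyN := (hNsub y).1 hy
    have hyTr : y ∉ Tr := by
      intro hyTr
      have : 0 < N'.card := Finset.card_pos.2 ⟨y, by
        rw [hN', Finset.mem_filter, mem_nbrIn]
        exact ⟨⟨hyTr, hyN.1.2⟩, hyN.2⟩⟩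
      omega
    refine ⟨{y}, by simp [hyN.1.1, hyTr], by simp, ?_, ?_⟩
    · intro w hw hbw hzw
      rw [Finset.mem_sdiff, Finset.mem_singleton] at hw
      exact hw.2 (Finset.card_le_one.1 (by omega : N.card ≤ 1) w
        ((hNsub w).2 ⟨⟨hw.1, hbw⟩, hzw⟩) y hy)
    · intro C hbC hC
      by_contra hn
      have : 0 < M.card :=
        Finset.card_pos.2 ⟨C, (hMmem C).2 ⟨⟨hbC, hC.trans (hmono _)⟩, hn⟩⟩
      omega

open scoped Classical in
theorem sum_sum_obstructions_le {V : Type*} [Fintype V] {F : SimpleGraph V} {T : Finset V}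
    {K : ℕ} (hdeg : ∀ v, (nbrIn F v Finset.univ).card ≤ K)
    (hT : ∀ x ∈ T, (nbrIn F x Finset.univ).card < K) {ψ : V → Fin K}
    (hψ : ProperOn F Finset.univ ψ) (z : V → Fin K) {Tr U : Finset V} (hTrT : Tr ⊆ T)
    (hUT : U ⊆ T) (hUTr : Disjoint U Tr) :
    ∑ b ∈ U, ∑ γ, obstructions F T z b Tr γ ≤ (K - 1) * Tr.card := by
  have h1 : ∀ b ∈ U, ∑ γ, obstructions F T z b Tr γ ≤ (nbrIn F b Tr).card +
      ∑ C with b ∈ attach F T C ∧ attach F T C ⊆ insert b Tr,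
        ∑ r ∈ compSet F T C, (nbrIn F r Tr).card := fun b hb =>
    sum_obstructions_le fun C hbC hC =>
      card_not_compat_le_sum hdeg hT hψ hbC (Finset.disjoint_left.1 hUTr hb) hC z
  refine (Finset.sum_le_sum h1).trans ?_
  rw [Finset.sum_add_distrib]
  have h2 : ∑ b ∈ U, ∑ C with b ∈ attach F T C ∧ attach F T C ⊆ insert b Tr,
        ∑ r ∈ compSet F T C, (nbrIn F r Tr).card ≤
      ∑ r with r ∉ T, (nbrIn F r Tr).card := by
    rw [← sum_sum_compSet F T fun r => (nbrIn F r Tr).card, ← Finset.sum_biUnion]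
    · exact Finset.sum_le_sum_of_subset (Finset.subset_univ _)
    · intro b hb b' hb' hne
      rw [Function.onFun, Finset.disjoint_left]
      intro C hC hC'
      have h3 := (Finset.mem_filter.1 hC').2.2 (Finset.mem_filter.1 hC).2.1
      rw [Finset.mem_insert] at h3
      rcases h3 with h3 | h3
      · exact hne h3
      · exact Finset.disjoint_left.1 hUTr hb h3
  have h3 : ∑ b ∈ U, (nbrIn F b Tr).card + ∑ r with r ∉ T, (nbrIn F r Tr).card ≤
      ∑ v, (nbrIn F v Tr).card := by
    rw [← Finset.sum_union]
    · exact Finset.sum_le_sum_of_subset (Finset.subset_univ _)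
    · rw [Finset.disjoint_left]
      intro x hx hx'
      exact (Finset.mem_filter.1 hx').2 (hUT hx)
  rw [sum_card_nbrIn_comm F Finset.univ] at h3
  have h4 : ∑ y ∈ Tr, (nbrIn F y Finset.univ).card ≤ (K - 1) * Tr.card := by
    rw [mul_comm, ← smul_eq_mul]
    refine Finset.sum_le_card_nsmul _ _ _ fun y hy => ?_
    have := hT y (hTrT hy)
    omega
  omega

open scoped Classical in
theorem exists_step {V : Type*} [Fintype V] {F : SimpleGraph V} {T : Finset V}
    {K : ℕ} (hdeg : ∀ v, (nbrIn F v Finset.univ).card ≤ K)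
    (hT : ∀ x ∈ T, (nbrIn F x Finset.univ).card < K) {ψ : V → Fin K}
    (hψ : ProperOn F Finset.univ ψ) (z : V → Fin K) {Z Tr U : Finset V} (hZT : Z ⊆ T)
    (hTrZ : Tr ⊆ Z) (hUT : U ⊆ T) (hUZ : Disjoint U Z) (E : V → Finset (Fin K)) {c : ℕ}
    (hE : ∀ b ∈ U, (E b).card ≤ c) (hcount : (K - 1) * Tr.card < U.card * (K + 1 - 2 * c)) :
    ∃ b ∈ U, ∃ γ ∉ E b, ∃ X ⊆ Z \ Tr, X.card ≤ 1 ∧ (∀ y ∈ Z \ X, F.Adj b y → z y ≠ γ) ∧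
      ∀ C, b ∈ attach F T C → attach F T C ⊆ insert b (Z \ X) →
        Compat F T C (Function.update z b γ) := by
  by_contra hcon
  have h2 : ∀ b ∈ U, ∀ γ ∉ E b,
      2 ≤ obstructions F T z b Z γ + obstructions F T z b Tr γ := by
    intro b hb γ hγ
    by_contra hlt
    obtain ⟨X, hX⟩ := exists_of_obstructions_le_one
      (by omega : obstructions F T z b Z γ + obstructions F T z b Tr γ ≤ 1)
    exact hcon ⟨b, hb, γ, hγ, X, hX⟩
  have h3 : ∀ b ∈ U, K + 1 - 2 * c ≤ ∑ γ, obstructions F T z b Tr γ := by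
    intro b hb
    have h4 : 2 * (K - c) ≤
        ∑ γ, obstructions F T z b Z γ + ∑ γ, obstructions F T z b Tr γ := by
      rw [← Finset.sum_add_distrib]
      have h5 := Finset.card_nsmul_le_sum (Finset.univ \ E b)
        (fun γ => obstructions F T z b Z γ + obstructions F T z b Tr γ) 2
        (fun γ hγ => h2 b hb γ (Finset.mem_sdiff.1 hγ).2)
      have h6 := Finset.sum_le_sum_of_subset (f := fun γ =>
        obstructions F T z b Z γ + obstructions F T z b Tr γ) (Finset.subset_univ (Finset.univ \ E b))
      rw [Finset.card_sdiff_of_subset (Finset.subset_univ _), Finset.card_univ, Fintype.card_fin,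
        smul_eq_mul] at h5
      have := hE b hb
      omega
    have h7 : ∑ γ, obstructions F T z b Z γ ≤ (nbrIn F b Z).card +
        ∑ C with b ∈ attach F T C ∧ attach F T C ⊆ insert b Z,
          (nbrIn F b (compSet F T C)).card :=
      sum_obstructions_le fun C hbC _ => card_not_compat_le_card_nbrIn hdeg hbC z
    have h8 : ∑ C with b ∈ attach F T C ∧ attach F T C ⊆ insert b Z,
          (nbrIn F b (compSet F T C)).card ≤
        (nbrIn F b (Finset.univ.filter fun r => r ∉ T)).card := by
      refine (Finset.sum_le_sum_of_subset (Finset.subset_univ _)).trans (le_of_eq ?_)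
      simp only [nbrIn, Finset.card_filter _ (compSet F T _),
        Finset.card_filter _ (Finset.univ.filter fun r => r ∉ T)]
      exact sum_sum_compSet F T _
    have h9 : (nbrIn F b Z).card + (nbrIn F b (Finset.univ.filter fun r => r ∉ T)).card ≤
        (nbrIn F b Finset.univ).card := by
      rw [← Finset.card_union_of_disjoint]
      · exact Finset.card_le_card (Finset.union_subset (nbrIn_mono (Finset.subset_univ _))
          (nbrIn_mono (Finset.subset_univ _)))
      · rw [Finset.disjoint_left]
        intro x hx hx'
        rw [mem_nbrIn] at hx hx'
        exact (Finset.mem_filter.1 hx'.1).2 (hZT hx.1)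
    have h10 := hT b (hUT hb)
    omega
  have h4 := Finset.card_nsmul_le_sum U _ _ h3
  have h5 := sum_sum_obstructions_le hdeg hT hψ z (hTrZ.trans hZT) hUT
    (Finset.disjoint_of_subset_right hTrZ hUZ)
  rw [smul_eq_mul] at h4
  omega

open scoped Classical in
/-- `z` colours `A` so that this extends to a proper colouring of `F`, and `A` picks from every
`P i` at most `n i` vertices, of distinct colours. -/
def PartialTransversal {V ι : Type*} [Fintype V] (F : SimpleGraph V) (P : ι → Finset V)
    (n : ι → ℕ) {K : ℕ} (A : Finset V) (z : V → Fin K) : Prop :=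
  (∃ h : V → Fin K, ProperOn F Finset.univ h ∧ ∀ a ∈ A, h a = z a) ∧
    ∀ j, Set.InjOn z (A ∩ P j : Finset V) ∧ (A ∩ P j).card ≤ n j

open scoped Classical in
theorem PartialTransversal.congr {V ι : Type*} [Fintype V] {F : SimpleGraph V}
    {P : ι → Finset V} {n : ι → ℕ} {K : ℕ} {A : Finset V} {z w : V → Fin K}
    (h : PartialTransversal F P n A z) (he : ∀ a ∈ A, w a = z a) :
    PartialTransversal F P n A w := by
  obtain ⟨⟨g, hg, hgz⟩, h2⟩ := h
  refine ⟨⟨g, hg, fun a ha => by rw [hgz a ha, he a ha]⟩, fun j => ⟨?_, (h2 j).2⟩⟩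
  intro a ha b hb hab
  rw [Finset.mem_coe, Finset.mem_inter] at ha hb
  rw [he a ha.1, he b hb.1] at hab
  exact (h2 j).1 (Finset.mem_coe.2 (Finset.mem_inter.2 ha))
    (Finset.mem_coe.2 (Finset.mem_inter.2 hb)) hab

open scoped Classical in
theorem PartialTransversal.insert {V ι : Type*} [Fintype V] {F : SimpleGraph V}
    {T : Finset V} {P : ι → Finset V} {n : ι → ℕ} {K : ℕ}
    (hdeg : ∀ v, (nbrIn F v Finset.univ).card ≤ K)
    (hT : ∀ x ∈ T, (nbrIn F x Finset.univ).card < K)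
    (hP : ∀ i j x, x ∈ P i → x ∈ P j → i = j) {A X : Finset V} {z : V → Fin K}
    (hA : PartialTransversal F P n A z) (hAT : A ⊆ T) {b : V} (hbT : b ∈ T) (hbA : b ∉ A)
    {i : ι} (hbi : b ∈ P i) (hi : (A ∩ P i).card < n i) {γ : Fin K}
    (hγ : ∀ a ∈ A ∩ P i, z a ≠ γ) (hN : ∀ y ∈ A \ X, F.Adj b y → z y ≠ γ)
    (hR : ∀ C, b ∈ attach F T C → attach F T C ⊆ insert b (A \ X) →
      Compat F T C (Function.update z b γ)) :
    PartialTransversal F P n (insert b (A \ X)) (Function.update z b γ) := by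
  obtain ⟨⟨g, hg, hgz⟩, h2⟩ := hA
  have hne : ∀ a ∈ A, a ≠ b := fun a ha h => hbA (h ▸ ha)
  have hAX : ∀ a ∈ A \ X, a ∈ A := fun a ha => (Finset.mem_sdiff.1 ha).1
  refine ⟨?_, fun j => ?_⟩
  · refine exists_extension_of_compat hdeg hT
      (Finset.insert_subset hbT fun a ha => hAT (hAX a ha)) ?_ ?_
    · intro u hu v hv huv
      rw [Finset.mem_insert] at hu hv
      rcases hu with rfl | hu <;> rcases hv with rfl | hv
      · exact absurd huv (F.loopless.irrefl _)
      · rw [Function.update_self, Function.update_of_ne (hne v (hAX v hv))]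
        exact (hN v hv huv).symm
      · rw [Function.update_self, Function.update_of_ne (hne u (hAX u hu))]
        exact hN u hu huv.symm
      · rw [Function.update_of_ne (hne v (hAX v hv)), Function.update_of_ne (hne u (hAX u hu)),
          ← hgz u (hAX u hu), ← hgz v (hAX v hv)]
        exact hg u (Finset.mem_univ _) v (Finset.mem_univ _) huv
    · intro C hC
      by_cases hbC : b ∈ attach F T C
      · exact hR C hbC hC
      · refine (compat_of_properOn C hg).congr fun t ht => ?_
        have htb : t ≠ b := fun h => hbC (h ▸ ht)
        have := hC ht
        rw [Finset.mem_insert] at this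
        rw [Function.update_of_ne htb, hgz t (hAX t (this.resolve_left htb))]
  · by_cases hij : j = i
    · subst hij
      have hsub : Insert.insert b (A \ X) ∩ P j ⊆ Insert.insert b (A ∩ P j) := by
        intro x
        simp only [Finset.mem_inter, Finset.mem_insert, Finset.mem_sdiff]
        tauto
      refine ⟨?_, (Finset.card_le_card hsub).trans ((Finset.card_insert_le _ _).trans hi)⟩
      refine Set.InjOn.mono (Finset.coe_subset.2 hsub) ?_
      intro u hu v hv huv
      rw [Finset.mem_coe, Finset.mem_insert] at hu hv
      rcases hu with rfl | hu <;> rcases hv with rfl | hv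
      · rfl
      · rw [Function.update_self, Function.update_of_ne (hne v (Finset.mem_inter.1 hv).1)] at huv
        exact absurd huv.symm (hγ v hv)
      · rw [Function.update_self, Function.update_of_ne (hne u (Finset.mem_inter.1 hu).1)] at huv
        exact absurd huv (hγ u hu)
      · rw [Function.update_of_ne (hne v (Finset.mem_inter.1 hv).1),
          Function.update_of_ne (hne u (Finset.mem_inter.1 hu).1)] at huv
        exact (h2 j).1 (Finset.mem_coe.2 hu) (Finset.mem_coe.2 hv) huv
    · have hsub : Insert.insert b (A \ X) ∩ P j ⊆ A ∩ P j := by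
        intro x hx
        rw [Finset.mem_inter, Finset.mem_insert] at hx
        rcases hx with ⟨rfl | hx, hxj⟩
        · exact absurd (hP _ _ _ hxj hbi) hij
        · exact Finset.mem_inter.2 ⟨hAX x hx, hxj⟩
      refine ⟨?_, (Finset.card_le_card hsub).trans (h2 j).2⟩
      refine Set.InjOn.mono (Finset.coe_subset.2 hsub) ?_
      intro u hu v hv huv
      have hu' := (Finset.mem_inter.1 (Finset.mem_coe.1 hu)).1
      have hv' := (Finset.mem_inter.1 (Finset.mem_coe.1 hv)).1
      rw [Function.update_of_ne (hne v hv'), Function.update_of_ne (hne u hu')] at huv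
      exact (h2 j).1 hu hv huv

open scoped Classical in
/-- The alternating structure grown from a partial transversal `A` coloured by `f`: the classes
`I` have been reached, the vertices `B` have been added to `A`, coloured by `z`, and every
reached class has room in some partial transversal inside `A ∪ B` that is as large as `A`. -/
structure AlternatingTree {V ι : Type*} [Fintype V] (F : SimpleGraph V) (P : ι → Finset V)
    (n : ι → ℕ) {K : ℕ} (A : Finset V) (f : V → Fin K) (I : Finset ι) (B : Finset V)
    (z : V → Fin K) : Prop where
  disjoint : Disjoint A B
  card : B.card + 1 = I.card
  subset : B ⊆ I.biUnion P
  eqOn : ∀ a ∈ A, z a = f a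
  exchange : ∀ i ∈ I, ∃ A' ⊆ A ∪ B, A \ I.biUnion P ⊆ A' ∧ A'.card = A.card ∧
    PartialTransversal F P n A' z ∧ (A' ∩ P i).card < n i ∧ A' ∩ P i ⊆ A

open scoped Classical in
theorem AlternatingTree.card_lt {V ι : Type*} [Fintype V] {F : SimpleGraph V}
    {P : ι → Finset V} {n : ι → ℕ} {K c : ℕ}
    (hP : ∀ i j x, x ∈ P i → x ∈ P j → i = j) (hnc : ∀ i, n i ≤ c)
    (hc : 2 ≤ c) (hcard : ∀ i, 2 * n i + 3 ≤ (P i).card) (hK : 2 * c * (c + 2) ≤ K)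
    {A : Finset V} {f : V → Fin K} (hA : ∀ j, (A ∩ P j).card ≤ n j)
    {I : Finset ι} {B : Finset V} {z : V → Fin K} (h : AlternatingTree F P n A f I B z) :
    (K - 1) * ((A ∩ I.biUnion P) ∪ B).card <
      (I.biUnion P \ (A ∪ B)).card * (K + 1 - 2 * c) := by
  have h1 : (A ∩ I.biUnion P).card ≤ ∑ i ∈ I, n i := by
    rw [Finset.inter_biUnion]
    exact Finset.card_biUnion_le.trans (Finset.sum_le_sum fun i _ => hA i)
  have h2 : (I.biUnion P).card = ∑ i ∈ I, (P i).card := by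
    apply Finset.card_biUnion
    intro i _ j _ hij
    rw [Function.onFun, Finset.disjoint_left]
    exact fun x hx hx' => hij (hP i j x hx hx')
  have h3 : ∑ i ∈ I, (2 * n i + 3) ≤ (I.biUnion P).card := by
    rw [h2]
    exact Finset.sum_le_sum fun i _ => hcard i
  rw [Finset.sum_add_distrib, ← Finset.mul_sum, Finset.sum_const, smul_eq_mul] at h3
  have h4 : (I.biUnion P).card ≤
      (I.biUnion P \ (A ∪ B)).card + ((A ∩ I.biUnion P) ∪ B).card := by
    refine (Finset.card_le_card ?_).trans (Finset.card_union_le _ _)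
    intro x hx
    simp only [Finset.mem_union, Finset.mem_sdiff, Finset.mem_inter]
    tauto
  have h5 := Finset.card_union_le (A ∩ I.biUnion P) B
  have h6 := h.card
  have h7 : ∑ i ∈ I, n i ≤ I.card * c := by
    rw [← smul_eq_mul]
    exact Finset.sum_le_card_nsmul _ _ _ fun i _ => hnc i
  obtain ⟨e, he⟩ := Nat.exists_eq_add_of_le hK
  set u := (I.biUnion P \ (A ∪ B)).card
  set t := ((A ∩ I.biUnion P) ∪ B).card
  set s := ∑ i ∈ I, n i
  set m := B.card
  rw [← h6] at h3 h7
  obtain ⟨c', rfl⟩ := Nat.exists_eq_add_of_le hc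
  have e1 : K - 1 = (2 * (2 + c') * (2 + c' + 2) - 1) + e := by
    have : 0 < 2 * (2 + c') * (2 + c' + 2) := by positivity
    omega
  have e2 : 2 * (2 + c') * (2 + c' + 2) - 1 = 2 * c' * c' + 12 * c' + 15 := by
    have : 2 * (2 + c') * (2 + c' + 2) = 2 * c' * c' + 12 * c' + 16 := by ring
    omega
  have e3 : K + 1 - 2 * (2 + c') = 2 * c' * c' + 10 * c' + 13 + e := by
    have : 2 * (2 + c') * (2 + c' + 2) = 2 * c' * c' + 12 * c' + 16 := by ring
    omega
  rw [e3, e1, e2]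
  have ht : t ≤ s + m := by omega
  have hu : s + 2 * m + 3 ≤ u := by omega
  have : (2 * c' * c' + 12 * c' + 15 + e) * t ≤ (2 * c' * c' + 12 * c' + 15 + e) * (s + m) :=
    Nat.mul_le_mul_left _ ht
  have : (s + 2 * m + 3) * (2 * c' * c' + 10 * c' + 13 + e) ≤
      u * (2 * c' * c' + 10 * c' + 13 + e) := Nat.mul_le_mul_right _ hu
  have h8 : (2 * c' + 2) * s ≤ (2 * c' + 2) * ((m + 1) * (2 + c')) := Nat.mul_le_mul_left _ h7
  nlinarith [Nat.zero_le (e * m), Nat.zero_le (c' * c' * m), Nat.zero_le (c' * m)]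

open scoped Classical in
theorem AlternatingTree.exists_grow {V ι : Type*} [Fintype V] {F : SimpleGraph V}
    {T : Finset V} {P : ι → Finset V} {n : ι → ℕ} {K c : ℕ}
    (hdeg : ∀ v, (nbrIn F v Finset.univ).card ≤ K)
    (hT : ∀ x ∈ T, (nbrIn F x Finset.univ).card < K) {ψ : V → Fin K}
    (hψ : ProperOn F Finset.univ ψ)
    (hP : ∀ i j x, x ∈ P i → x ∈ P j → i = j) (hPT : ∀ x, x ∈ T ↔ ∃ i, x ∈ P i)
    (hnc : ∀ i, n i ≤ c) (hc : 2 ≤ c) (hcard : ∀ i, 2 * n i + 3 ≤ (P i).card)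
    (hK : 2 * c * (c + 2) ≤ K) {A : Finset V} (hAT : A ⊆ T) {f : V → Fin K}
    (hA : PartialTransversal F P n A f)
    (hmax : ∀ A' ⊆ T, ∀ g : V → Fin K, PartialTransversal F P n A' g → A'.card ≤ A.card)
    {I : Finset ι} {B : Finset V} {z : V → Fin K} (h : AlternatingTree F P n A f I B z) :
    ∃ I' B' z', AlternatingTree F P n A f I' B' z' ∧ I'.card = I.card + 1 := by
  have hIT : I.biUnion P ⊆ T := fun x hx => by
    obtain ⟨i, -, hx⟩ := Finset.mem_biUnion.1 hx
    exact (hPT x).2 ⟨i, hx⟩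
  have hBT : B ⊆ T := h.subset.trans hIT
  let E : V → Finset (Fin K) := fun b => (A.filter fun a => ∃ i, a ∈ P i ∧ b ∈ P i).image f
  obtain ⟨b, hbU, γ, hγE, X, hXZ, hX1, hN, hR⟩ := _root_.exists_step hdeg hT hψ z
    (Z := A ∪ B) (Tr := (A ∩ I.biUnion P) ∪ B) (U := I.biUnion P \ (A ∪ B))
    (Finset.union_subset hAT hBT) (Finset.union_subset_union_left Finset.inter_subset_left)
    (Finset.sdiff_subset.trans hIT) Finset.sdiff_disjoint E (c := c) (by
      intro b hb
      obtain ⟨i, -, hbi⟩ := Finset.mem_biUnion.1 (Finset.mem_sdiff.1 hb).1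
      refine Finset.card_image_le.trans ((Finset.card_le_card (t := A ∩ P i) ?_).trans
        ((hA.2 i).2.trans (hnc i)))
      intro a ha
      obtain ⟨haA, j, haj, hbj⟩ := Finset.mem_filter.1 ha
      exact Finset.mem_inter.2 ⟨haA, hP j i b hbj hbi ▸ haj⟩)
    (AlternatingTree.card_lt hP hnc hc hcard hK (fun j => (hA.2 j).2) h)
  rw [Finset.mem_sdiff] at hbU
  obtain ⟨i, hiI, hbi⟩ := Finset.mem_biUnion.1 hbU.1
  have hbA : b ∉ A := fun hb => hbU.2 (Finset.mem_union_left _ hb)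
  have hbB : b ∉ B := fun hb => hbU.2 (Finset.mem_union_right _ hb)
  obtain ⟨A', hA'sub, hA'I, hA'card, hA', hA'i, hA'A⟩ := h.exchange i hiI
  have hbA' : b ∉ A' := fun hb => hbU.2 (hA'sub hb)
  have hA'T : A' ⊆ T := hA'sub.trans (Finset.union_subset hAT hBT)
  have hXA : ∀ x ∈ X, x ∈ A \ I.biUnion P := by
    intro x hx
    have := hXZ hx
    simp only [Finset.mem_sdiff, Finset.mem_union, Finset.mem_inter] at this ⊢
    tauto
  have hnew : PartialTransversal F P n (Insert.insert b (A' \ X)) (Function.update z b γ) := by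
    refine hA'.insert hdeg hT hP hA'T (hIT hbU.1) hbA' hbi hA'i ?_ ?_ ?_
    · intro a ha hza
      have haA := hA'A ha
      rw [h.eqOn a haA] at hza
      exact hγE (Finset.mem_image.2
        ⟨a, Finset.mem_filter.2 ⟨haA, i, (Finset.mem_inter.1 ha).2, hbi⟩, hza⟩)
    · intro y hy
      exact hN y (Finset.sdiff_subset_sdiff hA'sub (Finset.Subset.refl _) hy)
    · intro C hbC hC
      exact hR C hbC (hC.trans (Finset.insert_subset_insert _
        (Finset.sdiff_subset_sdiff hA'sub (Finset.Subset.refl _))))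
  have hnewT : Insert.insert b (A' \ X) ⊆ T :=
    Finset.insert_subset (hIT hbU.1) (Finset.sdiff_subset.trans hA'T)
  have hle := hmax _ hnewT _ hnew
  have hbX : b ∉ A' \ X := fun hb => hbA' (Finset.mem_sdiff.1 hb).1
  rw [Finset.card_insert_of_notMem hbX,
    Finset.card_sdiff_of_subset fun x hx => hA'I (hXA x hx)] at hle
  have hX0 : 0 < X.card := by
    by_contra h0
    omega
  obtain ⟨x, hx⟩ := Finset.card_pos.1 hX0
  have hxA := Finset.mem_sdiff.1 (hXA x hx)
  obtain ⟨i', hxi'⟩ := (hPT x).1 (hAT hxA.1)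
  have hi' : i' ∉ I := fun hi => hxA.2 (Finset.mem_biUnion.2 ⟨i', hi, hxi'⟩)
  have hbi' : b ∉ P i' := fun hb => hi' (hP i i' b hbi hb ▸ hiI)
  refine ⟨Insert.insert i' I, Insert.insert b B, Function.update z b γ, ⟨?_, ?_, ?_, ?_, ?_⟩,
    Finset.card_insert_of_notMem hi'⟩
  · rw [Finset.disjoint_insert_right]
    exact ⟨hbA, h.disjoint⟩
  · rw [Finset.card_insert_of_notMem hi', Finset.card_insert_of_notMem hbB, h.card]
  · rw [Finset.biUnion_insert]
    exact (Finset.insert_subset hbU.1 h.subset).trans Finset.subset_union_right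
  · intro a ha
    have hab : a ≠ b := fun he => hbA (he ▸ ha)
    rw [Function.update_of_ne hab, h.eqOn a ha]
  · intro j hj
    rw [Finset.mem_insert] at hj
    rcases hj with rfl | hj
    · refine ⟨Insert.insert b (A' \ X), ?_, ?_, ?_, hnew, ?_, ?_⟩
      · intro y hy
        simp only [Finset.mem_insert, Finset.mem_sdiff, Finset.mem_union] at hy ⊢
        rcases hy with rfl | hy
        · exact Or.inr (Or.inl rfl)
        · have := hA'sub hy.1
          rw [Finset.mem_union] at this
          tauto
      · intro y hy
        rw [Finset.biUnion_insert, Finset.mem_sdiff, Finset.mem_union, not_or] at hy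
        refine Finset.mem_insert_of_mem (Finset.mem_sdiff.2
          ⟨hA'I (Finset.mem_sdiff.2 ⟨hy.1, hy.2.2⟩), fun hyX => hy.2.1 ?_⟩)
        rwa [Finset.card_le_one.1 hX1 y hyX x hx]
      · rw [Finset.card_insert_of_notMem hbX,
          Finset.card_sdiff_of_subset fun x hx => hA'I (hXA x hx)]
        have := Finset.card_le_card (fun x hx => hA'I (hXA x hx) : X ⊆ A')
        omega
      · refine lt_of_lt_of_le (Finset.card_lt_card ?_) (hA'.2 j).2
        rw [Finset.ssubset_iff_of_subset]
        · refine ⟨x, Finset.mem_inter.2 ⟨hA'I (hXA x hx), hxi'⟩, fun hxn => ?_⟩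
          rw [Finset.mem_inter, Finset.mem_insert, Finset.mem_sdiff] at hxn
          rcases hxn.1 with rfl | hxn
          · exact hbA hxA.1
          · exact hxn.2 hx
        · intro y hy
          rw [Finset.mem_inter, Finset.mem_insert, Finset.mem_sdiff] at hy
          rcases hy with ⟨rfl | hy, hyj⟩
          · exact absurd hyj hbi'
          · exact Finset.mem_inter.2 ⟨hy.1, hyj⟩
      · intro y hy
        rw [Finset.mem_inter, Finset.mem_insert, Finset.mem_sdiff] at hy
        rcases hy with ⟨rfl | hy, hyj⟩
        · exact absurd hyj hbi'
        · have := hA'sub hy.1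
          rw [Finset.mem_union] at this
          refine this.resolve_right fun hyB => hi' ?_
          obtain ⟨l, hl, hyl⟩ := Finset.mem_biUnion.1 (h.subset hyB)
          exact hP l j y hyl hyj ▸ hl
    · obtain ⟨A'', h1, h2, h3, h4, h5, h6⟩ := h.exchange j hj
      refine ⟨A'', h1.trans (Finset.union_subset_union_right (Finset.subset_insert _ _)),
        fun y hy => h2 ?_, h3, h4.congr fun a ha => ?_, h5, h6⟩
      · rw [Finset.biUnion_insert, Finset.mem_sdiff, Finset.mem_union, not_or] at hy
        exact Finset.mem_sdiff.2 ⟨hy.1, hy.2.2⟩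
      · exact Function.update_of_ne (fun he : a = b => hbU.2 (he ▸ h1 ha)) _ _

open scoped Classical in
/-- If disjoint sets `P i` consist of vertices of degree less than `K`, then some proper
`K`-colouring of `F` uses at least `n i` colours on every `P i`. -/
theorem exists_properOn_card_image {V ι : Type*} [Fintype V] [Finite ι] {F : SimpleGraph V}
    {P : ι → Finset V} {n : ι → ℕ} {K c : ℕ}
    (hdeg : ∀ v, (nbrIn F v Finset.univ).card ≤ K)
    (hT : ∀ i, ∀ x ∈ P i, (nbrIn F x Finset.univ).card < K) {ψ : V → Fin K}
    (hψ : ProperOn F Finset.univ ψ) (hP : ∀ i j x, x ∈ P i → x ∈ P j → i = j)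
    (hnc : ∀ i, n i ≤ c) (hc : 2 ≤ c) (hcard : ∀ i, 2 * n i + 3 ≤ (P i).card)
    (hK : 2 * c * (c + 2) ≤ K) :
    ∃ f : V → Fin K, ProperOn F Finset.univ f ∧ ∀ i, n i ≤ ((P i).image f).card := by
  have := Fintype.ofFinite ι
  set T := Finset.univ.biUnion P with hTdef
  have hPT : ∀ x, x ∈ T ↔ ∃ i, x ∈ P i := fun x => by simp [hTdef]
  have hT' : ∀ x ∈ T, (nbrIn F x Finset.univ).card < K := fun x hx => by
    obtain ⟨i, hi⟩ := (hPT x).1 hx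
    exact hT i x hi
  obtain ⟨A, hA, hmax⟩ := Finset.exists_max_image
    (T.powerset.filter fun A => ∃ f : V → Fin K, PartialTransversal F P n A f) Finset.card
    ⟨∅, by
      simp only [Finset.mem_filter, Finset.mem_powerset, Finset.empty_subset, true_and]
      exact ⟨ψ, ⟨ψ, hψ, by simp⟩, by simp⟩⟩
  rw [Finset.mem_filter, Finset.mem_powerset] at hA
  obtain ⟨hAT, g, hg⟩ := hA
  obtain ⟨f, hf, hfg⟩ := hg.1
  have hAf : PartialTransversal F P n A f := hg.congr hfg
  have hmax' : ∀ A' ⊆ T, ∀ g : V → Fin K, PartialTransversal F P n A' g → A'.card ≤ A.card :=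
    fun A' hA' g hg => hmax A' (Finset.mem_filter.2 ⟨Finset.mem_powerset.2 hA', g, hg⟩)
  refine ⟨f, hf, fun i => ?_⟩
  by_contra hlt
  have hi : (A ∩ P i).card < n i := by
    rw [← Finset.card_image_of_injOn (hAf.2 i).1]
    exact lt_of_le_of_lt (Finset.card_le_card (Finset.image_subset_image
      Finset.inter_subset_right)) (by omega)
  have htree : ∀ m, ∃ I B z, AlternatingTree F P n A f I B z ∧ I.card = m + 1 := by
    intro m
    induction m with
    | zero =>
      refine ⟨{i}, ∅, f, ⟨by simp, by simp, by simp, fun _ _ => rfl, fun j hj => ?_⟩, by simp⟩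
      rw [Finset.mem_singleton] at hj
      subst hj
      exact ⟨A, by simp, Finset.sdiff_subset, rfl, hAf, hi, Finset.inter_subset_left⟩
    | succ m ih =>
      obtain ⟨I, B, z, hI, hm⟩ := ih
      obtain ⟨I', B', z', hI', hm'⟩ := AlternatingTree.exists_grow hdeg hT' hψ hP hPT hnc hc hcard
        hK hAT hAf hmax' hI
      exact ⟨I', B', z', hI', by omega⟩
  obtain ⟨I, -, -, -, hI⟩ := htree (Fintype.card ι)
  have := Finset.card_le_univ I
  omega

open scoped Classical in
/-- The number of colours of class `j`. -/
noncomputable def classSize {D : ℕ} {J : Type*} (pal : Fin D → J) (j : J) : ℕ :=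
  (Finset.univ.filter fun a => pal a = j).card

open scoped Classical in
/-- The neighbours of `u` whose colour has class `j`. -/
noncomputable def nbrClass {V J : Type*} [Fintype V] (G : SimpleGraph V) {D : ℕ}
    (pal : Fin D → J) (f : V → Fin D) (j : J) (u : V) : Finset V :=
  Finset.univ.filter fun w => G.Adj u w ∧ pal (f w) = j

theorem mem_nbrClass {V J : Type*} [Fintype V] {G : SimpleGraph V} {D : ℕ}
    {pal : Fin D → J} {f : V → Fin D} {j : J} {u w : V} :
    w ∈ nbrClass G pal f j u ↔ G.Adj u w ∧ pal (f w) = j := by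
  simp [nbrClass]

theorem sum_classSize {D : ℕ} {J : Type*} [Fintype J] (pal : Fin D → J) :
    ∑ j, classSize pal j = D := by
  classical
  have h := Finset.card_eq_sum_card_fiberwise (f := pal) (s := Finset.univ) (t := Finset.univ)
    fun _ _ => Finset.mem_coe.2 (Finset.mem_univ _)
  rw [Finset.card_univ, Fintype.card_fin] at h
  refine Eq.trans (Finset.sum_congr rfl fun j _ => congrArg Finset.card ?_) h.symm
  ext a
  simp

theorem sum_card_nbrClass {V J : Type*} [Fintype V] [Fintype J] (G : SimpleGraph V) {D : ℕ}
    (pal : Fin D → J) (f : V → Fin D) (u : V) :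
    ∑ j, (nbrClass G pal f j u).card = (nbrIn G u Finset.univ).card := by
  classical
  rw [Finset.card_eq_sum_card_fiberwise (f := fun w => pal (f w)) (t := Finset.univ)
    fun _ _ => Finset.mem_coe.2 (Finset.mem_univ _)]
  refine Finset.sum_congr rfl fun j _ => congrArg _ ?_
  ext w
  simp [mem_nbrClass, mem_nbrIn]

open scoped Classical in
/-- The weight of the pair `a, b`: the inverse size of the colour class type if they are adjacent
and have colours of the same class. -/
noncomputable def pairWeight {V J : Type*} (G : SimpleGraph V) {D : ℕ}
    (pal : Fin D → J) (f : V → Fin D) (a b : V) : ℚ :=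
  if G.Adj a b ∧ pal (f a) = pal (f b) then (classSize pal (pal (f a)) : ℚ)⁻¹ else 0

theorem pairWeight_comm {V J : Type*} (G : SimpleGraph V) {D : ℕ}
    (pal : Fin D → J) (f : V → Fin D) (a b : V) :
    pairWeight G pal f a b = pairWeight G pal f b a := by
  unfold pairWeight
  by_cases h : G.Adj a b ∧ pal (f a) = pal (f b)
  · rw [if_pos h, if_pos ⟨h.1.symm, h.2.symm⟩, h.2]
  · rw [if_neg h, if_neg fun h' => h ⟨h'.1.symm, h'.2.symm⟩]

theorem sum_pairWeight {V J : Type*} [Fintype V] (G : SimpleGraph V) {D : ℕ}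
    (pal : Fin D → J) (f : V → Fin D) (u : V) :
    ∑ b, pairWeight G pal f u b =
      (nbrClass G pal f (pal (f u)) u).card * (classSize pal (pal (f u)) : ℚ)⁻¹ := by
  classical
  unfold pairWeight nbrClass
  rw [← Finset.sum_filter, Finset.sum_const, nsmul_eq_mul]
  simp only [eq_comm]

/-- A proper colouring minimising the total weight of the pairs. -/
def IsOptimal {V J : Type*} [Fintype V] (G : SimpleGraph V) {D : ℕ} (pal : Fin D → J)
    (f : V → Fin D) : Prop :=
  ProperOn G Finset.univ f ∧ ∀ g : V → Fin D, ProperOn G Finset.univ g →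
    ∑ a, ∑ b, pairWeight G pal f a b ≤ ∑ a, ∑ b, pairWeight G pal g a b

theorem exists_isOptimal {V J : Type*} [Fintype V] (G : SimpleGraph V) {D : ℕ} (pal : Fin D → J)
    {f : V → Fin D} (hf : ProperOn G Finset.univ f) : ∃ g, IsOptimal G pal g := by
  classical
  obtain ⟨g, hg, hmin⟩ := Finset.exists_min_image
    (Finset.univ.filter fun g : V → Fin D => ProperOn G Finset.univ g)
    (fun g => ∑ a, ∑ b, pairWeight G pal g a b) ⟨f, by simpa using hf⟩
  simp only [Finset.mem_filter, Finset.mem_univ, true_and] at hg hmin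
  exact ⟨g, hg, hmin⟩

theorem sum_sum_eq_of_symm {V : Type*} [Fintype V] [DecidableEq V] {s : V → V → ℚ}
    (hs : ∀ a b, s a b = s b a) (u : V) :
    ∑ a, ∑ b, s a b = ∑ a ∈ Finset.univ.erase u, ∑ b ∈ Finset.univ.erase u, s a b +
      2 * ∑ b, s u b - s u u := by
  have h : ∀ g : V → ℚ, ∑ a, g a = g u + ∑ a ∈ Finset.univ.erase u, g a := fun g =>
    (Finset.add_sum_erase _ _ (Finset.mem_univ u)).symm
  rw [h]
  have h2 : ∑ a ∈ Finset.univ.erase u, ∑ b, s a b =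
      ∑ a ∈ Finset.univ.erase u, s u a +
        ∑ a ∈ Finset.univ.erase u, ∑ b ∈ Finset.univ.erase u, s a b := by
    rw [← Finset.sum_add_distrib]
    refine Finset.sum_congr rfl fun a _ => ?_
    rw [h, hs]
  rw [h2, h (fun b => s u b)]
  ring

theorem IsOptimal.card_nbrClass_mul_le {V J : Type*} [Fintype V] {G : SimpleGraph V} {D : ℕ}
    {pal : Fin D → J} {f : V → Fin D} (hf : IsOptimal G pal f) {u : V} {j : J}
    (h : (nbrClass G pal f j u).card < classSize pal j) :
    (nbrClass G pal f (pal (f u)) u).card * classSize pal j ≤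
      (nbrClass G pal f j u).card * classSize pal (pal (f u)) := by
  classical
  by_cases hj : pal (f u) = j
  · rw [hj]
  obtain ⟨x, hx, hxn⟩ : ∃ x ∈ Finset.univ.filter (fun a => pal a = j),
      x ∉ (nbrClass G pal f j u).image f :=
    Finset.exists_mem_notMem_of_card_lt_card (lt_of_le_of_lt Finset.card_image_le h)
  rw [Finset.mem_filter] at hx
  have hxu : ∀ w, G.Adj u w → f w ≠ x := by
    intro w huw hw
    exact hxn (Finset.mem_image.2 ⟨w, mem_nbrClass.2 ⟨huw, hw ▸ hx.2⟩, hw⟩)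
  set g := Function.update f u x with hg
  have hgu : g u = x := Function.update_self _ _ _
  have hgne : ∀ w, w ≠ u → g w = f w := fun w hw => Function.update_of_ne hw _ _
  have hgp : ProperOn G Finset.univ g := by
    intro a _ b _ hab
    by_cases ha : a = u
    · subst ha
      rw [hgu, hgne b hab.ne']
      exact (hxu b hab).symm
    · by_cases hb : b = u
      · subst hb
        rw [hgu, hgne a ha]
        exact hxu a hab.symm
      · rw [hgne a ha, hgne b hb]
        exact hf.1 a (Finset.mem_univ _) b (Finset.mem_univ _) hab
  have h1 := hf.2 g hgp
  rw [sum_sum_eq_of_symm (pairWeight_comm G pal f) u,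
    sum_sum_eq_of_symm (pairWeight_comm G pal g) u] at h1
  have h2 : ∑ a ∈ Finset.univ.erase u, ∑ b ∈ Finset.univ.erase u, pairWeight G pal g a b =
      ∑ a ∈ Finset.univ.erase u, ∑ b ∈ Finset.univ.erase u, pairWeight G pal f a b := by
    refine Finset.sum_congr rfl fun a ha => Finset.sum_congr rfl fun b hb => ?_
    unfold pairWeight
    rw [hgne a (Finset.ne_of_mem_erase ha), hgne b (Finset.ne_of_mem_erase hb)]
  have h3 : ∀ f : V → Fin D, pairWeight G pal f u u = 0 := fun f => by
    unfold pairWeight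
    rw [if_neg fun h => G.loopless.irrefl _ h.1]
  rw [h2, h3, h3, sum_pairWeight, sum_pairWeight] at h1
  have h4 : nbrClass G pal g (pal (g u)) u = nbrClass G pal f j u := by
    rw [hgu, hx.2]
    ext w
    rw [mem_nbrClass, mem_nbrClass]
    refine and_congr_right fun huw => ?_
    rw [hgne w huw.ne']
  rw [h4, hgu, hx.2] at h1
  have hi : 0 < classSize pal (pal (f u)) :=
    Finset.card_pos.2 ⟨f u, by simp⟩
  have hj0 : 0 < classSize pal j := by omega
  have h5 : ((nbrClass G pal f (pal (f u)) u).card : ℚ) * (classSize pal (pal (f u)) : ℚ)⁻¹ ≤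
      (nbrClass G pal f j u).card * (classSize pal j : ℚ)⁻¹ := by linarith
  rw [← div_eq_mul_inv, ← div_eq_mul_inv, div_le_div_iff₀ (by exact_mod_cast hi)
    (by exact_mod_cast hj0)] at h5
  exact_mod_cast h5

theorem IsOptimal.card_nbrClass_le {V J : Type*} [Fintype V] [Fintype J] {G : SimpleGraph V}
    {D : ℕ} (hdeg : ∀ v, (nbrIn G v Finset.univ).card ≤ D) {pal : Fin D → J} {f : V → Fin D}
    (hf : IsOptimal G pal f) (u : V) :
    (nbrClass G pal f (pal (f u)) u).card ≤ classSize pal (pal (f u)) := by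
  by_contra hlt
  push Not at hlt
  have h1 : ∀ j, classSize pal j ≤ (nbrClass G pal f j u).card := by
    intro j
    by_contra hj
    push Not at hj
    have := hf.card_nbrClass_mul_le hj
    nlinarith
  have h2 : ∑ j, classSize pal j < ∑ j, (nbrClass G pal f j u).card :=
    Finset.sum_lt_sum (fun j _ => h1 j) ⟨_, Finset.mem_univ _, hlt⟩
  rw [sum_classSize, sum_card_nbrClass] at h2
  have := hdeg u
  omega

open scoped Classical in
/-- The classes of the colours of the neighbours of `v`. -/
noncomputable def classesSeen {V J : Type*} [Fintype V] [Fintype J] (G : SimpleGraph V) {D : ℕ}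
    (pal : Fin D → J) (f : V → Fin D) (v : V) : Finset J :=
  Finset.univ.filter fun j => (nbrClass G pal f j v).Nonempty

theorem mem_classesSeen {V J : Type*} [Fintype V] [Fintype J] {G : SimpleGraph V} {D : ℕ}
    {pal : Fin D → J} {f : V → Fin D} {v : V} {j : J} :
    j ∈ classesSeen G pal f v ↔ ∃ w, G.Adj v w ∧ pal (f w) = j := by
  unfold classesSeen
  rw [Finset.mem_filter]
  simp only [Finset.mem_univ, true_and, Finset.Nonempty, mem_nbrClass]

theorem IsOptimal.notMem_classesSeen {V J : Type*} [Fintype V] [Fintype J] {G : SimpleGraph V}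
    {D : ℕ} {pal : Fin D → J} (hpal : ∀ j, 0 < classSize pal j) {f : V → Fin D}
    (hf : IsOptimal G pal f) {v : V} (hv : (classesSeen G pal f v).card < Fintype.card J) :
    pal (f v) ∉ classesSeen G pal f v := by
  obtain ⟨l, -, hl⟩ : ∃ l ∈ Finset.univ, l ∉ classesSeen G pal f v :=
    Finset.exists_mem_notMem_of_card_lt_card (by rwa [Finset.card_univ])
  have h0 : (nbrClass G pal f l v).card = 0 := by
    rw [Finset.card_eq_zero, Finset.eq_empty_iff_forall_notMem]
    intro w hw
    exact hl (mem_classesSeen.2 ⟨w, mem_nbrClass.1 hw⟩)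
  have h1 := hf.card_nbrClass_mul_le (u := v) (j := l) (by rw [h0]; exact hpal l)
  rw [h0, zero_mul, Nat.le_zero, Nat.mul_eq_zero] at h1
  have h2 : (nbrClass G pal f (pal (f v)) v).card = 0 := h1.resolve_right (hpal l).ne'
  rw [Finset.card_eq_zero] at h2
  intro h
  obtain ⟨w, hw⟩ := mem_classesSeen.1 h
  have := mem_nbrClass.2 hw
  rw [h2] at this
  simp at this

open scoped Classical in
theorem IsOptimal.card_nbrClass_mul_le_sub {V J : Type*} [Fintype V] [Fintype J]
    {G : SimpleGraph V} {D : ℕ} (hdeg : ∀ v, (nbrIn G v Finset.univ).card ≤ D)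
    {pal : Fin D → J} (hpal : ∀ j, 0 < classSize pal j) {f : V → Fin D}
    (hf : IsOptimal G pal f) (x : V) (l : J) :
    (nbrClass G pal f (pal (f x)) x).card * classSize pal l +
      classSize pal (pal (f x)) * ((nbrClass G pal f l x).filter fun w =>
        (classesSeen G pal f w).card + 1 < Fintype.card J).card ≤
      classSize pal (pal (f x)) * (nbrClass G pal f l x).card := by
  set A := (nbrClass G pal f l x).filter fun w =>
        (classesSeen G pal f w).card + 1 < Fintype.card J with hA
  have hAmem : ∀ w, w ∈ A ↔ (G.Adj x w ∧ pal (f w) = l) ∧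
      (classesSeen G pal f w).card + 1 < Fintype.card J := fun w => by
    rw [hA, Finset.mem_filter, mem_nbrClass]
  have hown : ∀ w ∈ A, l ∉ classesSeen G pal f w := fun w hw => by
    rw [← ((hAmem w).1 hw).1.2]
    exact hf.notMem_classesSeen hpal (by have := ((hAmem w).1 hw).2; omega)
  have hnew : ∀ w ∈ A, ∃ a : Fin D, pal a ∉ classesSeen G pal f w ∧ pal a ≠ l := by
    intro w hw
    obtain ⟨l', -, hl'⟩ : ∃ l' ∈ Finset.univ, l' ∉ insert l (classesSeen G pal f w) :=
      Finset.exists_mem_notMem_of_card_lt_card (by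
        rw [Finset.card_univ]
        exact lt_of_le_of_lt (Finset.card_insert_le _ _) ((hAmem w).1 hw).2)
    obtain ⟨a, ha⟩ := Finset.card_pos.1 (hpal l')
    rw [Finset.mem_filter] at ha
    rw [Finset.mem_insert, not_or] at hl'
    exact ⟨a, ha.2 ▸ hl'.2, ha.2 ▸ hl'.1⟩
  have : Nonempty (Fin D) := ⟨f x⟩
  choose! r hr1 hr2 using hnew
  set g : V → Fin D := fun w => if w ∈ A then r w else f w with hg
  have hgA : ∀ w ∈ A, g w = r w := fun w hw => by simp [hg, hw]
  have hgn : ∀ w, w ∉ A → g w = f w := fun w hw => by simp [hg, hw]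
  have hindep : ∀ w ∈ A, ∀ b, G.Adj w b → b ∉ A := fun w hw b hwb hb =>
    hown w hw (mem_classesSeen.2 ⟨b, hwb, ((hAmem b).1 hb).1.2⟩)
  have hdiff : ∀ w ∈ A, ∀ b, G.Adj w b → pal (g w) ≠ pal (g b) := by
    intro w hw b hwb h
    rw [hgA w hw, hgn b (hindep w hw b hwb)] at h
    exact hr1 w hw (mem_classesSeen.2 ⟨b, hwb, h.symm⟩)
  have hdiff' : ∀ w ∈ A, ∀ b, G.Adj w b → pal (f w) ≠ pal (f b) := by
    intro w hw b hwb h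
    exact hown w hw (mem_classesSeen.2 ⟨b, hwb, by rw [← h]; exact ((hAmem w).1 hw).1.2⟩)
  have hgopt : IsOptimal G pal g := by
    constructor
    · intro a _ b _ hab
      by_cases ha : a ∈ A
      · exact fun h => hdiff a ha b hab (congrArg pal h)
      · by_cases hb : b ∈ A
        · exact fun h => hdiff b hb a hab.symm (congrArg pal h.symm)
        · rw [hgn a ha, hgn b hb]
          exact hf.1 a (Finset.mem_univ _) b (Finset.mem_univ _) hab
    · intro h hh
      refine le_trans (le_of_eq ?_) (hf.2 h hh)
      refine Finset.sum_congr rfl fun a _ => Finset.sum_congr rfl fun b _ => ?_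
      unfold pairWeight
      by_cases hab : G.Adj a b
      · by_cases ha : a ∈ A
        · rw [if_neg fun h => hdiff a ha b hab h.2, if_neg fun h => hdiff' a ha b hab h.2]
        · by_cases hb : b ∈ A
          · rw [if_neg fun h => hdiff b hb a hab.symm h.2.symm,
              if_neg fun h => hdiff' b hb a hab.symm h.2.symm]
          · rw [hgn a ha, hgn b hb]
      · rw [if_neg fun h => hab h.1, if_neg fun h => hab h.1]
  have hAsub : A ⊆ nbrClass G pal f l x := Finset.filter_subset _ _
  have hle := hf.card_nbrClass_le hdeg x
  have hcardA := Finset.card_le_card hAsub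
  obtain ⟨e, he⟩ := Nat.exists_eq_add_of_le hcardA
  rw [he]
  have key : (nbrClass G pal f (pal (f x)) x).card * classSize pal l ≤
      classSize pal (pal (f x)) * e := by
    by_cases hel : classSize pal l ≤ e
    · exact Nat.mul_le_mul hle hel
    push Not at hel
    by_cases hlx : l = pal (f x)
    · have hA0 : A = ∅ := by
        rw [Finset.eq_empty_iff_forall_notMem]
        intro w hw
        exact hown w hw (mem_classesSeen.2 ⟨x, ((hAmem w).1 hw).1.1.symm, hlx.symm⟩)
      rw [hA0, Finset.card_empty, zero_add] at he
      rw [← hlx, he, mul_comm]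
    have hxA : x ∉ A := fun hx => G.loopless.irrefl _ ((hAmem x).1 hx).1.1
    have h1 : nbrClass G pal g l x = nbrClass G pal f l x \ A := by
      ext w
      rw [Finset.mem_sdiff, mem_nbrClass, mem_nbrClass]
      by_cases hw : w ∈ A
      · rw [hgA w hw]
        simp [hw, hr2 w hw]
      · rw [hgn w hw]
        simp [hw]
    have h2 : nbrClass G pal g (pal (f x)) x = nbrClass G pal f (pal (f x)) x := by
      ext w
      rw [mem_nbrClass, mem_nbrClass]
      refine and_congr_right fun hxw => ?_
      by_cases hw : w ∈ A
      · have h3 : pal (f w) ≠ pal (f x) := hdiff' w hw x hxw.symm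
        have h4 : pal (g w) ≠ pal (f x) := by
          rw [← hgn x hxA]
          exact hdiff w hw x hxw.symm
        simp [h3, h4]
      · rw [hgn w hw]
    have h3 : (nbrClass G pal g l x).card = e := by
      rw [h1, Finset.card_sdiff_of_subset hAsub, he]
      omega
    have h4 := hgopt.card_nbrClass_mul_le (u := x) (j := l) (by rw [h3]; exact hel)
    rw [hgn x hxA, h2, h3] at h4
    rw [mul_comm (classSize pal (pal (f x)))]
    exact h4
  rw [mul_add]
  omega

open scoped Classical in
/-- In an optimal colouring, a vertex with little slack in its class has few neighbours that miss
two classes. -/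
theorem IsOptimal.card_le_slack_mul {V J : Type*} [Fintype V] [Fintype J]
    {G : SimpleGraph V} {D : ℕ} (hdeg : ∀ v, (nbrIn G v Finset.univ).card ≤ D)
    {pal : Fin D → J} (hJ : 0 < Fintype.card J)
    (hpal : ∀ j, Fintype.card J ≤ classSize pal j)
    (hpalD : ∀ j, D < Fintype.card J * (classSize pal j + 1)) {f : V → Fin D}
    (hf : IsOptimal G pal f) (x : V) :
    ((nbrIn G x Finset.univ).filter fun w =>
        (classesSeen G pal f w).card + 1 < Fintype.card J).card ≤
      (classSize pal (pal (f x)) - (nbrClass G pal f (pal (f x)) x).card) *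
        (Fintype.card J + 1) := by
  set y := ((nbrIn G x Finset.univ).filter fun w =>
        (classesSeen G pal f w).card + 1 < Fintype.card J).card with hy
  have h1 := Finset.sum_le_sum fun l (_ : l ∈ Finset.univ) =>
    hf.card_nbrClass_mul_le_sub hdeg (fun j => lt_of_lt_of_le hJ (hpal j)) x l
  rw [Finset.sum_add_distrib, ← Finset.mul_sum, ← Finset.mul_sum, ← Finset.mul_sum,
    sum_classSize, sum_card_nbrClass] at h1
  have h2 : ∑ l, ((nbrClass G pal f l x).filter fun w =>
        (classesSeen G pal f w).card + 1 < Fintype.card J).card = y := by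
    rw [hy, Finset.card_eq_sum_card_fiberwise (f := fun w => pal (f w)) (t := Finset.univ)
      fun _ _ => Finset.mem_coe.2 (Finset.mem_univ _)]
    refine Finset.sum_congr rfl fun j _ => congrArg _ ?_
    ext w
    simp [mem_nbrClass, mem_nbrIn]
    tauto
  rw [h2] at h1
  obtain ⟨σ, hσ⟩ := Nat.exists_eq_add_of_le (hf.card_nbrClass_le hdeg x)
  have h3 := hdeg x
  have h4 := hpalD (pal (f x))
  have h5 := hpal (pal (f x))
  set d := classSize pal (pal (f x))
  set n := (nbrClass G pal f (pal (f x)) x).card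
  set m := Fintype.card J
  have h6 : d - n = σ := by omega
  rw [h6]
  have h7 : d * y ≤ σ * D := by
    have : d * (nbrIn G x Finset.univ).card ≤ d * D := Nat.mul_le_mul_left _ h3
    rw [hσ] at this h1 ⊢
    nlinarith
  have h8 : σ * D ≤ σ * (m * (d + 1)) := Nat.mul_le_mul_left _ h4.le
  have h9 : d * y ≤ d * (σ * (m + 1)) := by
    have : σ * m ≤ σ * d := Nat.mul_le_mul_left _ h5
    nlinarith
  exact Nat.le_of_mul_le_mul_left h9 (by omega)

/-- The residue of a colour modulo `m + 1`. -/
def residueClass (D m : ℕ) (a : Fin D) : Fin (m + 1) :=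
  ⟨a % (m + 1), Nat.mod_lt _ (Nat.succ_pos m)⟩

theorem le_classSize_residueClass {D m k : ℕ} (h : k * (m + 1) ≤ D) (j : Fin (m + 1)) :
    k ≤ classSize (residueClass D m) j := by
  classical
  have hlt : ∀ a : Fin k, (j : ℕ) + (m + 1) * a < D := fun a => by
    have h1 := j.2
    have h2 : (a : ℕ) + 1 ≤ k := a.2
    nlinarith
  calc k = (Finset.univ : Finset (Fin k)).card := by simp
    _ ≤ _ := Finset.card_le_card_of_injOn (fun a => (⟨j + (m + 1) * a, hlt a⟩ : Fin D)) ?_ ?_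
  · intro a _
    simp [residueClass, Fin.ext_iff, Nat.mod_eq_of_lt j.2, Nat.add_mul_mod_self_left]
  · intro a _ b _ hab
    simp only [Fin.mk.injEq] at hab
    exact Fin.ext (Nat.eq_of_mul_eq_mul_left (Nat.succ_pos m) (Nat.add_left_cancel hab))

theorem lt_mul_classSize_residueClass {D m : ℕ} (j : Fin (m + 1)) :
    D < (m + 1) * (classSize (residueClass D m) j + 1) := by
  have h := le_classSize_residueClass (Nat.div_mul_le_self D (m + 1)) j
  have h1 := Nat.lt_mul_div_succ D (Nat.succ_pos m)
  exact lt_of_lt_of_le h1 (Nat.mul_le_mul_left _ (Nat.succ_le_succ h))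

/-- A Hall-type lemma: if each `x` lies in at most `B * cap x` of the sets `T v` and `T v` has at
least `n v * B` elements, then one can choose `n v` elements of each `T v`, using each `x` at most
`cap x` times. -/
theorem exists_subset_card_eq_of_card_filter_le {ι V : Type*} [Finite ι] [Fintype V]
    [DecidableEq V] (T : ι → Finset V) (n : ι → ℕ) (cap : V → ℕ) {B : ℕ} (hB : 0 < B)
    (hT : ∀ v, n v * B ≤ (T v).card)
    (hcap : ∀ x, ∀ I : Finset ι, (∀ v ∈ I, x ∈ T v) → I.card ≤ B * cap x) :
    ∃ S : ι → Finset V, (∀ v, S v ⊆ T v) ∧ (∀ v, (S v).card = n v) ∧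
      ∀ x, ∀ I : Finset ι, (∀ v ∈ I, x ∈ S v) → I.card ≤ cap x := by
  classical
  let C := Σ v : ι, Fin (n v)
  have hblock : ∀ v, ∃ e : Fin (n v) × Fin B → V, Function.Injective e ∧ ∀ a, e a ∈ T v := by
    intro v
    have h : Fintype.card (Fin (n v) × Fin B) ≤ Fintype.card (T v) := by simpa using hT v
    obtain ⟨e⟩ := Function.Embedding.nonempty_of_card_le h
    exact ⟨fun a => e a, fun a b hab => e.injective (Subtype.ext hab), fun a => (e a).2⟩
  choose e he heT using hblock
  let t : C → Finset (V × ℕ) := fun q =>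
    (Finset.univ.image fun b => e q.1 (q.2, b)).biUnion fun x =>
      (Finset.range (cap x)).image fun i => (x, i)
  have htmem : ∀ q x i, (x, i) ∈ t q ↔ (∃ b, e q.1 (q.2, b) = x) ∧ i < cap x := by
    intro q x i
    simp [t]
  have hall : ∀ s : Finset C, s.card ≤ (s.biUnion t).card := by
    intro s
    refine Nat.le_of_mul_le_mul_left ?_ hB
    let U : Finset V := s.biUnion fun q => Finset.univ.image fun b => e q.1 (q.2, b)
    have hU : s.biUnion t = (U.sigma fun x => Finset.range (cap x)).image
        fun y => (y.1, y.2) := by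
      ext ⟨x, i⟩
      simp only [Finset.mem_biUnion, htmem, Finset.mem_image, Finset.mem_sigma, Prod.mk.injEq, U,
        Finset.mem_univ, true_and, Finset.mem_range]
      constructor
      · rintro ⟨q, hq, hb, hi⟩
        exact ⟨⟨x, i⟩, ⟨⟨q, hq, hb⟩, hi⟩, rfl, rfl⟩
      · rintro ⟨⟨x', i'⟩, ⟨⟨q, hq, hb⟩, hi⟩, rfl, rfl⟩
        exact ⟨q, hq, hb, hi⟩
    have hUc : (s.biUnion t).card = ∑ x ∈ U, cap x := by
      rw [hU, Finset.card_image_of_injective, Finset.card_sigma]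
      · simp
      · rintro ⟨a, b⟩ ⟨a', b'⟩ h
        simp only [Prod.mk.injEq] at h
        obtain ⟨rfl, rfl⟩ := h
        rfl
    rw [hUc, Finset.mul_sum]
    have h1 : B * s.card = (s ×ˢ (Finset.univ : Finset (Fin B))).card := by
      rw [Finset.card_product, Finset.card_univ, Fintype.card_fin, mul_comm]
    rw [h1, Finset.card_eq_sum_card_fiberwise (f := fun z => e z.1.1 (z.1.2, z.2)) (t := U)]
    · refine Finset.sum_le_sum fun x _ => ?_
      set R := (s ×ˢ (Finset.univ : Finset (Fin B))).filter
        fun z => e z.1.1 (z.1.2, z.2) = x with hR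
      have hRx : ∀ z ∈ R, e z.1.1 (z.1.2, z.2) = x := fun z hz => (Finset.mem_filter.1 hz).2
      rw [← Finset.card_image_of_injOn (f := fun z => z.1.1) (s := R)]
      · refine hcap x _ fun v hv => ?_
        obtain ⟨z, hz, rfl⟩ := Finset.mem_image.1 hv
        rw [← hRx z hz]
        exact heT _ _
      · rintro ⟨⟨v, a⟩, b⟩ hz ⟨⟨v', a'⟩, b'⟩ hz' h
        simp only at h
        subst h
        have h2 := he v ((hRx _ hz).trans (hRx _ hz').symm)
        simp only [Prod.mk.injEq] at h2
        obtain ⟨rfl, rfl⟩ := h2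
        rfl
    · rintro ⟨q, b⟩ hz
      rw [Finset.mem_coe, Finset.mem_product] at hz
      simp only [U, Finset.coe_biUnion, Set.mem_iUnion]
      exact ⟨q, hz.1, by simp⟩
  obtain ⟨g, hg, hgt⟩ := (Finset.all_card_le_biUnion_card_iff_exists_injective t).1 hall
  have hge : ∀ q, (∃ b, e q.1 (q.2, b) = (g q).1) ∧ (g q).2 < cap (g q).1 := fun q =>
    (htmem q _ _).1 (hgt q)
  refine ⟨fun v => Finset.univ.image fun a => (g ⟨v, a⟩).1, fun v x hx => ?_, fun v => ?_,
    fun x I hI => ?_⟩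
  · obtain ⟨a, -, rfl⟩ := Finset.mem_image.1 hx
    obtain ⟨b, hb⟩ := (hge ⟨v, a⟩).1
    rw [← hb]
    exact heT _ _
  · rw [Finset.card_image_of_injective]
    · simp
    · intro a a' h
      obtain ⟨b, hb⟩ := (hge ⟨v, a⟩).1
      obtain ⟨b', hb'⟩ := (hge ⟨v, a'⟩).1
      have h2 := he v ((hb.trans h).trans hb'.symm)
      simp only [Prod.mk.injEq] at h2
      exact h2.1
  · have h1 : ∀ v ∈ I, ∃ a, (g ⟨v, a⟩).1 = x := fun v hv => by
      obtain ⟨a, -, ha⟩ := Finset.mem_image.1 (hI v hv)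
      exact ⟨a, ha⟩
    choose a ha using h1
    calc I.card = I.attach.card := by simp
      _ ≤ (Finset.range (cap x)).card := Finset.card_le_card_of_injOn
          (fun v => (g ⟨v.1, a v.1 v.2⟩).2) ?_ ?_
      _ = cap x := by simp
    · intro v _
      have h2 := (hge ⟨v.1, a v.1 v.2⟩).2
      rw [ha v.1 v.2] at h2
      simpa using h2
    · intro v _ w _ h
      have h2 := hg (Prod.ext ((ha v.1 v.2).trans (ha w.1 w.2).symm) h)
      exact Subtype.ext (congrArg Sigma.fst h2)

open scoped Classical in
/-- A graph of maximum degree at most `K` has a proper `K`-colouring as soon as the adjacent pairs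
of vertices of degree `K` are properly coloured. -/
theorem exists_properOn_of_forall_full {V : Type*} [Fintype V] {F : SimpleGraph V} {K : ℕ}
    (hdeg : ∀ v, (nbrIn F v Finset.univ).card ≤ K) (f : V → Fin K)
    (hf : ∀ u v, F.Adj u v → K ≤ (nbrIn F u Finset.univ).card →
      K ≤ (nbrIn F v Finset.univ).card → f u ≠ f v) :
    ∃ ψ : V → Fin K, ProperOn F Finset.univ ψ := by
  obtain ⟨Λ, -, h1, -, h3⟩ := exists_pinned_closure F K ∅ Finset.univ (Finset.disjoint_empty_left _)
    (fun y _ => by simpa using hdeg y) f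
  have hfull : ∀ u, u ∉ Λ → K ≤ (nbrIn F u Finset.univ).card := by
    intro u hu
    by_contra hlt
    refine hu (h1 u (Finset.mem_univ _) ?_)
    push Not at hlt
    simpa [nbrIn] using hlt
  obtain ⟨ψ, -, hψ⟩ := h3 f (by simp) (by
    intro u hu v hv huv
    rw [Finset.mem_sdiff] at hu hv
    exact hf u v huv (hfull u hu.2) (hfull v hv.2))
  exact ⟨ψ, by simpa using hψ⟩

open scoped Classical in
/-- If the sets `S i` overlap so little that making them cliques keeps the degrees of their
vertices below `K`, and the sets `P i` are disjoint and consist of vertices of degree below `K`,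
then some proper `K`-colouring is injective on each `S i` and uses many colours on each `P i`. -/
theorem exists_properOn_card_image_of_cliques {V ι κ : Type*} [Fintype V] [Finite ι] [Finite κ]
    {F : SimpleGraph V} {K c : ℕ} (hc : 2 ≤ c) (hK : 2 * c * (c + 2) ≤ K)
    (hdeg : ∀ v, (nbrIn F v Finset.univ).card ≤ K) {f : V → Fin K}
    (hf : ProperOn F Finset.univ f) {S : ι → Finset V} (hSc : ∀ i, (S i).card ≤ c)
    (hS : ∀ x, ∀ I : Finset ι, I.Nonempty → (∀ i ∈ I, x ∈ S i) →
      (nbrIn F x Finset.univ).card + I.card * (c - 1) < K)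
    {P : κ → Finset V} {n : κ → ℕ} (hnc : ∀ i, n i ≤ c)
    (hcard : ∀ i, 2 * n i + 3 ≤ (P i).card)
    (hP : ∀ i j x, x ∈ P i → x ∈ P j → i = j)
    (hPdeg : ∀ i, ∀ x ∈ P i, (nbrIn F x Finset.univ).card < K)
    (hPS : ∀ i j x, x ∈ P i → x ∉ S j) :
    ∃ g : V → Fin K, ProperOn F Finset.univ g ∧ (∀ i, (S i).card ≤ ((S i).image g).card) ∧
      ∀ i, n i ≤ ((P i).image g).card := by
  have := Fintype.ofFinite ι
  let H : SimpleGraph V :=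
    { Adj := fun u v => F.Adj u v ∨ (u ≠ v ∧ ∃ i, u ∈ S i ∧ v ∈ S i)
      symm := ⟨fun u v h => h.imp (fun h => h.symm) fun ⟨h1, i, h2, h3⟩ => ⟨h1.symm, i, h3, h2⟩⟩
      loopless := ⟨fun u h => h.elim (F.loopless.irrefl u) fun h => h.1 rfl⟩ }
  let I : V → Finset ι := fun x => Finset.univ.filter fun i => x ∈ S i
  have hHsub : ∀ x, nbrIn H x Finset.univ ⊆
      nbrIn F x Finset.univ ∪ (I x).biUnion fun i => (S i).erase x := by
    intro x y hy
    rw [Finset.mem_union, mem_nbrIn, Finset.mem_biUnion]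
    rcases (mem_nbrIn.1 hy).2 with h | ⟨hne, i, hx, hy⟩
    · exact Or.inl ⟨Finset.mem_univ _, h⟩
    · exact Or.inr ⟨i, by simp [I, hx], Finset.mem_erase.2 ⟨hne.symm, hy⟩⟩
  have hHcard : ∀ x, (nbrIn H x Finset.univ).card ≤
      (nbrIn F x Finset.univ).card + (I x).card * (c - 1) := by
    intro x
    refine (Finset.card_le_card (hHsub x)).trans ((Finset.card_union_le _ _).trans ?_)
    refine Nat.add_le_add_left (Finset.card_biUnion_le_card_mul _ _ _ fun i hi => ?_) _
    have hx : x ∈ S i := by simpa [I] using hi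
    rw [Finset.card_erase_of_mem hx]
    exact Nat.sub_le_sub_right (hSc i) 1
  have hempty : ∀ x, I x = ∅ → (nbrIn H x Finset.univ).card ≤ (nbrIn F x Finset.univ).card :=
    fun x hx => by simpa [hx] using hHcard x
  have hlt : ∀ x, (I x).Nonempty → (nbrIn H x Finset.univ).card < K := fun x hx =>
    (hHcard x).trans_lt (hS x _ hx fun i hi => by simpa [I] using hi)
  have hHdeg : ∀ x, (nbrIn H x Finset.univ).card ≤ K := fun x =>
    (I x).eq_empty_or_nonempty.elim (fun h => (hempty x h).trans (hdeg x)) fun h => (hlt x h).le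
  obtain ⟨ψ, hψ⟩ := exists_properOn_of_forall_full hHdeg f (by
    intro u v huv hu _
    rcases huv with h | ⟨_, i, hi, _⟩
    · exact hf u (Finset.mem_univ _) v (Finset.mem_univ _) h
    · exact absurd (hlt u ⟨i, by simp [I, hi]⟩) (not_lt.2 hu))
  obtain ⟨g, hg, hgP⟩ := exists_properOn_card_image hHdeg (fun i x hx =>
    (hempty x (by
      rw [Finset.eq_empty_iff_forall_notMem]
      intro j hj
      exact hPS i j x hx (by simpa [I] using hj))).trans_lt (hPdeg i x hx)) hψ hP hnc hc hcard hK
  refine ⟨g, fun u hu v hv huv => hg u hu v hv (Or.inl huv), fun i => ?_, hgP⟩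
  rw [Finset.card_image_of_injOn]
  intro u hu v hv huv
  by_contra hne
  exact hg u (Finset.mem_univ _) v (Finset.mem_univ _) (Or.inr ⟨hne, i, hu, hv⟩) huv

open scoped Classical in
/-- Recolouring inside the classes: the sets `S i` and `P i` of
`exists_properOn_card_image_of_cliques` may live in different classes of colours. -/
theorem exists_recolouring {V J ι κ : Type*} [Fintype V] [Finite ι] [Finite κ]
    {G : SimpleGraph V} {D c : ℕ} {pal : Fin D → J} (hc : 2 ≤ c)
    (hK : ∀ j, 2 * c * (c + 2) ≤ classSize pal j) {f : V → Fin D}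
    (hf : ProperOn G Finset.univ f)
    (hdeg : ∀ v, (nbrClass G pal f (pal (f v)) v).card ≤ classSize pal (pal (f v)))
    {S : ι → Finset V} {s : ι → J} (hSs : ∀ i, ∀ x ∈ S i, pal (f x) = s i)
    (hSc : ∀ i, (S i).card ≤ c)
    (hS : ∀ x, ∀ I : Finset ι, I.Nonempty → (∀ i ∈ I, x ∈ S i) →
      (nbrClass G pal f (pal (f x)) x).card + I.card * (c - 1) < classSize pal (pal (f x)))
    {P : κ → Finset V} {p : κ → J} {n : κ → ℕ} (hPp : ∀ i, ∀ x ∈ P i, pal (f x) = p i)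
    (hnc : ∀ i, n i ≤ c) (hcard : ∀ i, 2 * n i + 3 ≤ (P i).card)
    (hP : ∀ i j x, x ∈ P i → x ∈ P j → i = j)
    (hPdeg : ∀ i, ∀ x ∈ P i,
      (nbrClass G pal f (pal (f x)) x).card < classSize pal (pal (f x)))
    (hPS : ∀ i j x, x ∈ P i → x ∉ S j) :
    ∃ g : V → Fin D, ProperOn G Finset.univ g ∧ (∀ v, pal (g v) = pal (f v)) ∧
      (∀ i, (S i).card ≤ ((S i).image g).card) ∧ ∀ i, n i ≤ ((P i).image g).card := by
  have he : ∀ j, Nonempty (Fin (classSize pal j) ≃ {a // pal a = j}) := fun j =>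
    ⟨(Fintype.equivFinOfCardEq (by rw [Fintype.card_subtype, classSize])).symm⟩
  let e : ∀ j, Fin (classSize pal j) ≃ {a // pal a = j} := fun j => (he j).some
  let F : J → SimpleGraph V := fun j =>
    { Adj := fun u v => G.Adj u v ∧ pal (f u) = j ∧ pal (f v) = j
      symm := ⟨fun u v h => ⟨h.1.symm, h.2.2, h.2.1⟩⟩
      loopless := ⟨fun u h => G.loopless.irrefl u h.1⟩ }
  have hF : ∀ v, nbrIn (F (pal (f v))) v Finset.univ = nbrClass G pal f (pal (f v)) v := by
    intro v
    ext w
    rw [mem_nbrIn, mem_nbrClass]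
    exact ⟨fun h => ⟨h.2.1, h.2.2.2⟩, fun h => ⟨Finset.mem_univ _, h.1, rfl, h.2⟩⟩
  have hF0 : ∀ j v, pal (f v) ≠ j → (nbrIn (F j) v Finset.univ).card = 0 := by
    intro j v hv
    rw [Finset.card_eq_zero, Finset.eq_empty_iff_forall_notMem]
    exact fun w hw => hv (mem_nbrIn.1 hw).2.2.1
  have hpos : ∀ j, 0 < classSize pal j := fun j => lt_of_lt_of_le (by positivity) (hK j)
  have hex : ∀ j, ∃ g : V → Fin (classSize pal j), ProperOn (F j) Finset.univ g ∧
      (∀ i : {i // s i = j}, (S i).card ≤ ((S i).image g).card) ∧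
      ∀ i : {i // p i = j}, n i ≤ ((P i).image g).card := by
    intro j
    refine exists_properOn_card_image_of_cliques hc (hK j)
      (S := fun i : {i // s i = j} => S i) (P := fun i : {i // p i = j} => P i)
      (n := fun i : {i // p i = j} => n i) (f := fun v => if h : pal (f v) = j then (e j).symm ⟨f v, h⟩ else ⟨0, hpos j⟩) ?_ ?_
      (fun i => hSc i) ?_ (fun i => hnc i) (fun i => hcard i) ?_ ?_ fun i i' x => hPS i i' x
    · intro v
      by_cases hv : pal (f v) = j
      · subst hv
        rw [hF]
        exact hdeg v
      · rw [hF0 j v hv]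
        exact Nat.zero_le _
    · rintro u - v - ⟨huv, hu, hv⟩ h
      simp only [dif_pos hu, dif_pos hv] at h
      have := congrArg Subtype.val ((e j).symm.injective h)
      exact hf u (Finset.mem_univ _) v (Finset.mem_univ _) huv this
    · intro x I hI hx
      obtain ⟨i, hi⟩ := hI
      have hxj : pal (f x) = j := (hSs i x (hx i hi)).trans i.2
      subst hxj
      rw [hF]
      have := hS x (I.image Subtype.val) ⟨i, Finset.mem_image_of_mem _ hi⟩ (by
        intro k hk
        obtain ⟨l, hl, rfl⟩ := Finset.mem_image.1 hk
        exact hx l hl)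
      rwa [Finset.card_image_of_injective _ Subtype.val_injective] at this
    · exact fun i i' x hx hx' => Subtype.ext (hP i i' x hx hx')
    · intro i x hx
      have hxj : pal (f x) = j := (hPp i x hx).trans i.2
      subst hxj
      rw [hF]
      exact hPdeg i x hx
  choose h hh hhS hhP using hex
  let g : V → Fin D := fun v => e (pal (f v)) (h (pal (f v)) v)
  have hgpal : ∀ v, pal (g v) = pal (f v) := fun v => (e (pal (f v)) (h (pal (f v)) v)).2
  have hgimg : ∀ j (T : Finset V), (∀ x ∈ T, pal (f x) = j) →
      (T.image (h j)).card ≤ (T.image g).card := by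
    intro j T hT
    have h1 : T.image g = (T.image (h j)).image fun a => (e j a : Fin D) := by
      rw [Finset.image_image]
      refine Finset.image_congr fun x hx => ?_
      have := hT x hx
      subst this
      rfl
    rw [h1]
    exact (Finset.card_image_of_injective _ (Subtype.val_injective.comp (e j).injective)).ge
  refine ⟨g, ?_, hgpal, fun i => ?_, fun i => ?_⟩
  · intro u _ v _ huv h1
    have h2 : pal (f v) = pal (f u) := by rw [← hgpal, ← hgpal, h1]
    refine hh (pal (f u)) u (Finset.mem_univ _) v (Finset.mem_univ _) ⟨huv, rfl, h2⟩ ?_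
    have h3 : g v = e (pal (f u)) (h (pal (f u)) v) := by
      change ((e (pal (f v)) (h (pal (f v)) v) : {a // pal a = pal (f v)}) : Fin D) = _
      rw [h2]
    rw [h3] at h1
    exact (e (pal (f u))).injective (Subtype.ext h1)
  · exact (hhS (s i) ⟨i, rfl⟩).trans (hgimg _ _ (hSs i))
  · exact (hhP (p i) ⟨i, rfl⟩).trans (hgimg _ _ (hPp i))

open scoped Classical in
theorem card_classesSeen_le_card_image {V J : Type*} [Fintype V] [Fintype J]
    {G : SimpleGraph V} {D : ℕ} {pal : Fin D → J} {f g : V → Fin D}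
    (hg : ∀ v, pal (g v) = pal (f v)) (v : V) :
    (classesSeen G pal f v).card ≤ ((nbrIn G v Finset.univ).image g).card := by
  refine (Finset.card_le_card (t := ((nbrIn G v Finset.univ).image g).image pal) ?_).trans
    Finset.card_image_le
  intro j hj
  obtain ⟨w, hvw, hw⟩ := mem_classesSeen.1 hj
  rw [Finset.image_image]
  exact Finset.mem_image.2 ⟨w, mem_nbrIn.2 ⟨Finset.mem_univ _, hvw⟩, (hg w).trans hw⟩

open scoped Classical in
theorem card_image_add_card_classesSeen_le {V J : Type*} [Fintype V] [Fintype J]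
    {G : SimpleGraph V} {D : ℕ} {pal : Fin D → J} {f g : V → Fin D}
    (hg : ∀ v, pal (g v) = pal (f v)) {v : V} {j : J} {T : Finset V}
    (hT : T ⊆ nbrClass G pal f j v) :
    (T.image g).card + (classesSeen G pal f v).card ≤
      ((nbrIn G v Finset.univ).image g).card + 1 := by
  rw [← Finset.card_filter_add_card_filter_not (s := (nbrIn G v Finset.univ).image g)
    (p := fun a => pal a = j), add_assoc]
  refine add_le_add (Finset.card_le_card ?_) ?_
  · intro a ha
    obtain ⟨w, hw, rfl⟩ := Finset.mem_image.1 ha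
    have h := mem_nbrClass.1 (hT hw)
    exact Finset.mem_filter.2 ⟨Finset.mem_image_of_mem _
      (mem_nbrIn.2 ⟨Finset.mem_univ _, h.1⟩), (hg w).trans h.2⟩
  · refine (Nat.le_add_of_sub_le (Finset.pred_card_le_card_erase (a := j))).trans
      (Nat.succ_le_succ ?_)
    refine (Finset.card_le_card ?_).trans (Finset.card_image_le (f := pal))
    intro l hl
    rw [Finset.mem_erase] at hl
    obtain ⟨w, hvw, hw⟩ := mem_classesSeen.1 hl.2
    refine Finset.mem_image.2 ⟨g w, Finset.mem_filter.2 ⟨Finset.mem_image_of_mem _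
      (mem_nbrIn.2 ⟨Finset.mem_univ _, hvw⟩), ?_⟩, (hg w).trans hw⟩
    rw [hg, hw]
    exact hl.1

/-- Some class contains at least the average number of neighbours of `v`. -/
theorem exists_card_le_card_classesSeen_mul {V J : Type*} [Fintype V] [Fintype J] [Nonempty J]
    (G : SimpleGraph V) {D : ℕ} (pal : Fin D → J) (f : V → Fin D) (v : V) :
    ∃ j, (nbrIn G v Finset.univ).card ≤
      (classesSeen G pal f v).card * (nbrClass G pal f j v).card := by
  classical
  obtain ⟨j, -, hj⟩ := Finset.exists_max_image Finset.univ
    (fun j => (nbrClass G pal f j v).card) Finset.univ_nonempty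
  refine ⟨j, ?_⟩
  rw [← sum_card_nbrClass G pal f v, ← Finset.sum_subset (Finset.subset_univ
    (classesSeen G pal f v)), ← smul_eq_mul]
  · exact Finset.sum_le_card_nsmul _ _ _ fun l _ => hj l (Finset.mem_univ _)
  · intro l _ hl
    rw [Finset.card_eq_zero, Finset.eq_empty_iff_forall_notMem]
    exact fun w hw => hl (mem_classesSeen.2 ⟨w, mem_nbrClass.1 hw⟩)

theorem rich_bound {c t m T R : ℕ} (hc : 2 ≤ c) (htm : t + m = c + 1)
    (hT : (c ^ 3 + 8 * c ^ 2 + 19 * c + 6) * (c + 1) ≤ t * T) (hR : T ≤ 2 * R) :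
    m * (2 * (c - 1) * (c + 2)) ≤ R := by
  obtain ⟨b, rfl⟩ := Nat.exists_eq_add_of_le' hc
  have h1 : b + 2 - 1 = b + 1 := by omega
  rw [h1]
  by_contra hlt
  push Not at hlt
  have h2 : 4 * (t * m) ≤ (b + 3) ^ 2 := by
    have : (b + 3) = t + m := by omega
    rw [this]
    zify
    nlinarith [sq_nonneg ((t : ℤ) - m)]
  have h3 : t * T ≤ 2 * (t * (m * (2 * (b + 1) * (b + 2 + 2)))) := by
    calc t * T ≤ t * (2 * R) := Nat.mul_le_mul_left _ hR
      _ ≤ t * (2 * (m * (2 * (b + 1) * (b + 2 + 2)))) := by gcongr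
      _ = _ := by ring
  have h4 : 2 * (t * (m * (2 * (b + 1) * (b + 2 + 2)))) ≤ (b + 3) ^ 2 * ((b + 1) * (b + 4)) := by
    calc _ = 4 * (t * m) * ((b + 1) * (b + 4)) := by ring
      _ ≤ _ := Nat.mul_le_mul_right _ h2
  have h5 : (b + 3) ^ 2 * ((b + 1) * (b + 4)) <
      ((b + 2) ^ 3 + 8 * (b + 2) ^ 2 + 19 * (b + 2) + 6) * (b + 2 + 1) := by
    ring_nf
    nlinarith
  omega

theorem poor_bound {c t m T Q : ℕ} (hc : 2 ≤ c) (htm : t + m = c + 1)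
    (hT : (c ^ 3 + 8 * c ^ 2 + 19 * c + 6) * (c + 1) ≤ t * T) (hQ : T ≤ 2 * Q) :
    (2 * m + 3) * ((c - 1) * (c + 2)) ≤ Q := by
  obtain ⟨b, rfl⟩ := Nat.exists_eq_add_of_le' hc
  have h1 : b + 2 - 1 = b + 1 := by omega
  rw [h1]
  by_contra hlt
  push Not at hlt
  have h2 : 8 * (t * (2 * m + 3)) ≤ (2 * b + 9) ^ 2 := by
    have : 2 * b + 9 = 2 * t + (2 * m + 3) := by omega
    rw [this]
    zify
    nlinarith [sq_nonneg (2 * (t : ℤ) - (2 * m + 3))]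
  have h3 : t * T ≤ 2 * (t * ((2 * m + 3) * ((b + 1) * (b + 2 + 2)))) := by
    calc t * T ≤ t * (2 * Q) := Nat.mul_le_mul_left _ hQ
      _ ≤ t * (2 * ((2 * m + 3) * ((b + 1) * (b + 2 + 2)))) := by gcongr
      _ = _ := by ring
  have h4 : 4 * (2 * (t * ((2 * m + 3) * ((b + 1) * (b + 2 + 2))))) ≤
      (2 * b + 9) ^ 2 * ((b + 1) * (b + 4)) := by
    calc _ = 8 * (t * (2 * m + 3)) * ((b + 1) * (b + 4)) := by ring
      _ ≤ _ := Nat.mul_le_mul_right _ h2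
  have h5 : (2 * b + 9) ^ 2 * ((b + 1) * (b + 4)) <
      4 * (((b + 2) ^ 3 + 8 * (b + 2) ^ 2 + 19 * (b + 2) + 6) * (b + 2 + 1)) := by
    ring_nf
    nlinarith
  omega

/-- The colours of a Brooks colouring can be rearranged so that every vertex of large degree sees
`c` colours. -/
theorem exists_properOn_nondegenerate {V : Type*} [Fintype V] {G : SimpleGraph V} {D c : ℕ}
    (hdeg : ∀ v, (nbrIn G v Finset.univ).card ≤ D) (hc : 2 ≤ c)
    (hD : (c ^ 3 + 8 * c ^ 2 + 19 * c + 6) * (c + 1) ≤ D) {f : V → Fin D}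
    (hf : ProperOn G Finset.univ f) :
    ∃ g : V → Fin D, ProperOn G Finset.univ g ∧
      ∀ v, (c ^ 3 + 8 * c ^ 2 + 19 * c + 6) * (c + 1) ≤ (nbrIn G v Finset.univ).card →
        c ≤ ((nbrIn G v Finset.univ).image g).card := by
  classical
  set k := c ^ 3 + 8 * c ^ 2 + 19 * c + 6 with hk
  set pal := residueClass D c with hpal
  have hsize : ∀ j, k ≤ classSize pal j := le_classSize_residueClass hD
  obtain ⟨f, hf⟩ := exists_isOptimal G pal hf
  have hown := hf.card_nbrClass_le hdeg
  set σ : V → ℕ := fun x =>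
    classSize pal (pal (f x)) - (nbrClass G pal f (pal (f x)) x).card with hσ
  have hfew : ∀ x, ∀ I : Finset V, (∀ v ∈ I, G.Adj x v ∧ (classesSeen G pal f v).card < c) →
      I.card ≤ σ x * (c + 2) := by
    intro x I hI
    have h := hf.card_le_slack_mul hdeg (by simp) (fun j => by
      rw [Fintype.card_fin]
      exact le_trans (by rw [hk]; nlinarith) (hsize j)) (fun j => by
      rw [Fintype.card_fin]
      exact lt_mul_classSize_residueClass j) x
    rw [Fintype.card_fin] at h
    refine (Finset.card_le_card fun v hv => ?_).trans h
    exact Finset.mem_filter.2 ⟨mem_nbrIn.2 ⟨Finset.mem_univ _, (hI v hv).1⟩,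
      Nat.succ_lt_succ (hI v hv).2⟩
  choose j hj using exists_card_le_card_classesSeen_mul G pal f
  set T : V → Finset V := fun v => nbrClass G pal f (j v) v with hTdef
  set R : V → Finset V := fun v => (T v).filter fun x => c ≤ σ x with hR
  set Q : V → Finset V := fun v => (T v).filter fun x => ¬ c ≤ σ x with hQ
  set m : V → ℕ := fun v => c + 1 - (classesSeen G pal f v).card with hm
  let W : V → Prop := fun v => k * (c + 1) ≤ (nbrIn G v Finset.univ).card ∧
    (classesSeen G pal f v).card < c
  have hRQ : ∀ v, (R v).card + (Q v).card = (T v).card := fun v =>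
    Finset.card_filter_add_card_filter_not _
  have hW : ∀ v, W v → (classesSeen G pal f v).card + m v = c + 1 ∧
      k * (c + 1) ≤ (classesSeen G pal f v).card * (T v).card ∧ m v ≤ c := by
    intro v hv
    have h1 := hv.1.trans (hj v)
    have h2 : (classesSeen G pal f v).card ≠ 0 := by
      intro h0
      rw [h0, zero_mul, hk] at h1
      simp at h1
    have := hv.2
    simp only [hm]
    exact ⟨by omega, h1, by omega⟩
  have hTadj : ∀ v, ∀ x ∈ T v, G.Adj x v := fun v x hx => (mem_nbrClass.1 hx).1.symm
  have hTpal : ∀ v, ∀ x ∈ T v, pal (f x) = j v := fun v x hx => (mem_nbrClass.1 hx).2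
  let ι := {v // W v ∧ (T v).card ≤ 2 * (R v).card}
  let κ := {v // W v ∧ (T v).card ≤ 2 * (Q v).card}
  obtain ⟨b, rfl⟩ := Nat.exists_eq_add_of_le' hc
  have hb1 : b + 2 - 1 = b + 1 := by omega
  have hval : ∀ {p : V → Prop} (I : Finset {v // p v}),
      (I.map (Function.Embedding.subtype p)).card = I.card := fun I => Finset.card_map _
  obtain ⟨S, hST, hSc, hScap⟩ := exists_subset_card_eq_of_card_filter_le
    (fun v : ι => R v) (fun v => m v) (fun x => (σ x - 1) / (b + 1))
    (B := 2 * (b + 1) * (b + 4)) (by positivity)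
    (fun v => by
      have := rich_bound hc (hW v v.2.1).1 (hW v v.2.1).2.1 v.2.2
      rwa [hb1] at this) (by
      intro x I hI
      rcases I.eq_empty_or_nonempty with rfl | ⟨v, hv⟩
      · simp
      have hx := (Finset.mem_filter.1 (hI v hv)).2
      have h1 := hfew x (I.map (Function.Embedding.subtype _)) (by
        intro w hw
        obtain ⟨u, hu, rfl⟩ := Finset.mem_map.1 hw
        exact ⟨hTadj _ _ (Finset.mem_filter.1 (hI u hu)).1, u.2.1.2⟩)
      rw [hval] at h1
      refine h1.trans ?_
      have h2 := Nat.div_add_mod (σ x - 1) (b + 1)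
      have h3 : (σ x - 1) % (b + 1) < b + 1 := Nat.mod_lt (σ x - 1) (Nat.succ_pos b)
      have h4 : 1 ≤ (σ x - 1) / (b + 1) :=
        (Nat.one_le_div_iff (Nat.succ_pos b)).2 (by omega)
      set q := (σ x - 1) / (b + 1)
      have h5 : σ x ≤ 2 * (b + 1) * q := by
        have h6 : b + 1 ≤ (b + 1) * q := Nat.le_mul_of_pos_right _ h4
        rw [mul_assoc]
        omega
      calc σ x * (b + 4) ≤ 2 * (b + 1) * q * (b + 4) := Nat.mul_le_mul_right _ h5
        _ = _ := by ring)
  obtain ⟨P, hPT, hPc, hPcap⟩ := exists_subset_card_eq_of_card_filter_le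
    (fun v : κ => Q v) (fun v => 2 * m v + 3) (fun _ => 1)
    (B := (b + 1) * (b + 4)) (by positivity)
    (fun v => by
      have := poor_bound hc (hW v v.2.1).1 (hW v v.2.1).2.1 v.2.2
      rwa [hb1] at this) (by
      intro x I hI
      rcases I.eq_empty_or_nonempty with rfl | ⟨v, hv⟩
      · simp
      have hx := (Finset.mem_filter.1 (hI v hv)).2
      have h1 := hfew x (I.map (Function.Embedding.subtype _)) (by
        intro w hw
        obtain ⟨u, hu, rfl⟩ := Finset.mem_map.1 hw
        exact ⟨hTadj _ _ (Finset.mem_filter.1 (hI u hu)).1, u.2.1.2⟩)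
      rw [hval] at h1
      refine h1.trans ?_
      rw [mul_one]
      exact Nat.mul_le_mul_right _ (by omega))
  have hSR : ∀ i, ∀ x ∈ S i, x ∈ T i ∧ b + 2 ≤ σ x := fun i x hx =>
    Finset.mem_filter.1 (hST i hx)
  have hPQ : ∀ i, ∀ x ∈ P i, x ∈ T i ∧ ¬ b + 2 ≤ σ x := fun i x hx =>
    Finset.mem_filter.1 (hPT i hx)
  obtain ⟨g, hg, hgpal, hgS, hgP⟩ := exists_recolouring (G := G) (pal := pal) (S := S)
    (s := fun i => j i) (P := P) (p := fun i => j i) (n := fun i => m i) hc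
    (fun l => le_trans (by rw [hk]; nlinarith) (hsize l)) hf.1 hown
    (fun i x hx => hTpal i x (hSR i x hx).1)
    (fun i => (hSc i).trans_le (hW i i.2.1).2.2)
    (by
      rintro x I ⟨i, hi⟩ hI
      have h1 := (hSR i x (hI i hi)).2
      have h2 := hScap x I hI
      have h3 := Nat.div_mul_le_self (σ x - 1) (b + 1)
      have h4 := Nat.mul_le_mul_right (b + 1) h2
      rw [hb1]
      simp only [hσ] at *
      omega)
    (fun i x hx => hTpal i x (hPQ i x hx).1)
    (fun i => (hW i i.2.1).2.2) (fun i => (hPc i).ge)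
    (by
      intro i i' x hx hx'
      by_contra hne
      have h := hPcap x {i, i'} (by simp [hx, hx'])
      rw [Finset.card_pair hne] at h
      omega)
    (by
      intro i x hx
      have h1 := hfew x {(i : V)} (by simpa using ⟨hTadj _ _ (hPQ i x hx).1, i.2.1.2⟩)
      have h2 : σ x ≠ 0 := by
        intro h0
        simp [h0] at h1
      simp only [hσ] at h2
      omega)
    (fun i i' x hx hx' => (hPQ i x hx).2 (hSR i' x hx').2)
  refine ⟨g, hg, fun v hv => ?_⟩
  by_cases hs : b + 2 ≤ (classesSeen G pal f v).card
  · exact hs.trans (card_classesSeen_le_card_image hgpal v)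
  have hvW : W v := ⟨hv, not_le.1 hs⟩
  have h1 := (hW v hvW).1
  have h2 := hRQ v
  by_cases hr : (T v).card ≤ 2 * (R v).card
  · have h3 := hgS ⟨v, hvW, hr⟩
    have h4 := hSc ⟨v, hvW, hr⟩
    have h5 := card_image_add_card_classesSeen_le hgpal
      (fun x hx => (hSR ⟨v, hvW, hr⟩ x hx).1 : S ⟨v, hvW, hr⟩ ⊆ nbrClass G pal f (j v) v)
    dsimp only at h3 h4 h5
    omega
  · have hq : (T v).card ≤ 2 * (Q v).card := by omega
    have h3 := hgP ⟨v, hvW, hq⟩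
    have h5 := card_image_add_card_classesSeen_le hgpal
      (fun x hx => (hPQ ⟨v, hvW, hq⟩ x hx).1 : P ⟨v, hvW, hq⟩ ⊆ nbrClass G pal f (j v) v)
    dsimp only at h3 h5
    omega

/-- Let `D ≥ 3` and let `G` be a finite simple graph with maximum degree at
most `D` containing no clique on `D+1` vertices. Then for every integer `c ≥ 2`, `G` admits a
proper vertex coloring with `D` colors such that every vertex of degree at least
`p = (c³ + 8c² + 19c + 6)(c+1)` has at least `c` distinct colors among its neighbors. -/
theorem brooks_nondegenerate {V : Type*} [Fintype V] [DecidableEq V]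
    (G : SimpleGraph V) [DecidableRel G.Adj] (D : ℕ) (hD : 3 ≤ D)
    (hdeg : ∀ v : V, G.degree v ≤ D) (hfree : G.CliqueFree (D + 1))
    (c : ℕ) (hc : 2 ≤ c) :
    ∃ f : V → Fin D,
      (∀ u v : V, G.Adj u v → f u ≠ f v) ∧
      (∀ v : V, (c ^ 3 + 8 * c ^ 2 + 19 * c + 6) * (c + 1) ≤ G.degree v →
        c ≤ ((G.neighborFinset v).image f).card) := by
  have hN : ∀ v, nbrIn G v Finset.univ = G.neighborFinset v := fun v => by
    ext w
    simp [mem_nbrIn]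
  have hdeg' : ∀ v, (nbrIn G v Finset.univ).card ≤ D := fun v => by
    rw [hN]
    exact hdeg v
  obtain ⟨f, hf⟩ := exists_properOn_of_cliqueFree G D hD hdeg' hfree Finset.univ
  by_cases hp : (c ^ 3 + 8 * c ^ 2 + 19 * c + 6) * (c + 1) ≤ D
  · obtain ⟨g, hg, hgc⟩ := exists_properOn_nondegenerate hdeg' hc hp hf
    refine ⟨g, fun u v => hg u (Finset.mem_univ _) v (Finset.mem_univ _), fun v hv => ?_⟩
    have := hgc v (by rwa [hN])
    rwa [hN] at this
  · exact ⟨f, fun u v => hf u (Finset.mem_univ _) v (Finset.mem_univ _),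
      fun v hv => absurd (hv.trans (hdeg v)) hp⟩
end

section
/- Let G be a finite simple graph with maximum degree at most D that contains no clique on D+1 vertices, and let D = α_1 + α_2 + ... + α_{c+1} where each α_i ≥ 2 is an integer. Then among all colorings of V(G) with the colors {1,…,c+1} there exists a coloring ξ such that (1) ξ minimizes Φ over all colorings of V(G) with colors {1,…,c+1}, and (2) for every i ∈ {1,…,c+1} there is no clique on α_i + 1 vertices all of which have color i in ξ. -/
open scoped Classical

/-- The number of edges of `G` both of whose endpoints have color `i` under `ξ`. -/
noncomputable def monoEdges {V : Type*} [Fintype V] [DecidableEq V] (G : SimpleGraph V)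
    [DecidableRel G.Adj] {k : ℕ} (ξ : V → Fin k) (i : Fin k) : ℕ :=
  (G.edgeFinset.filter fun e => ∀ v ∈ e, ξ v = i).card

/-- `Φ(ξ) = Σ_i f_i(ξ)/α_i` as a rational number. -/
noncomputable def Phi {V : Type*} [Fintype V] [DecidableEq V] (G : SimpleGraph V)
    [DecidableRel G.Adj] {k : ℕ} (α : Fin k → ℕ) (ξ : V → Fin k) : ℚ :=
  ∑ i, (monoEdges G ξ i : ℚ) / (α i : ℚ)

section

variable {V : Type*} {G : SimpleGraph V} {k : ℕ} {α : Fin k → ℕ} {ξ : V → Fin k}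
  {a b : Fin k} {A : Finset V} {x : V}

/-- `s` is a clique on `α i + 1` vertices, all of color `i`. -/
def IsFullClique (G : SimpleGraph V) (α : Fin k → ℕ) (ξ : V → Fin k) (i : Fin k)
    (s : Finset V) : Prop :=
  G.IsNClique (α i + 1) s ∧ ∀ v ∈ s, ξ v = i

theorem IsFullClique.card_erase [DecidableEq V] (hA : IsFullClique G α ξ a A) (hx : x ∈ A) :
    (A.erase x).card = α a := by
  rw [Finset.card_erase_of_mem hx, hA.1.2, Nat.add_sub_cancel]

variable [Fintype V] [DecidableRel G.Adj]

/-- The number of neighbors of `v` which have color `i` under `ξ`. -/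
def colorDegree (G : SimpleGraph V) [DecidableRel G.Adj] (ξ : V → Fin k) (i : Fin k) (v : V) : ℕ :=
  ((G.neighborFinset v).filter fun u => ξ u = i).card

theorem sum_colorDegree (ξ : V → Fin k) (v : V) :
    ∑ i, colorDegree G ξ i v = G.degree v := by
  unfold colorDegree
  rw [← SimpleGraph.card_neighborFinset_eq_degree]
  exact (Finset.card_eq_sum_card_fiberwise (fun _ _ => Finset.mem_coe.2 (Finset.mem_univ _))).symm

variable [DecidableEq V]

/-- Splitting the edges of color `i` by whether they contain `x`. -/
theorem monoEdges_eq_add (ξ : V → Fin k) (i : Fin k) (x : V) :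
    monoEdges G ξ i =
      (G.edgeFinset.filter fun e => x ∉ e ∧ ∀ v ∈ e, ξ v = i).card +
        if ξ x = i then colorDegree G ξ i x else 0 := by
  have hx : (G.edgeFinset.filter fun e => x ∈ e ∧ ∀ v ∈ e, ξ v = i).card =
      if ξ x = i then colorDegree G ξ i x else 0 := by
    split_ifs with h
    · unfold colorDegree
      symm
      refine Finset.card_bij (fun u _ => s(x, u)) ?_ ?_ ?_
      · intro u hu
        simp only [Finset.mem_filter, SimpleGraph.mem_neighborFinset] at hu
        simp [hu.1, hu.2, h]
      · intro u _ w _ huw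
        exact Sym2.congr_right.1 huw
      · intro e he
        simp only [Finset.mem_filter, SimpleGraph.mem_edgeFinset] at he
        obtain ⟨he, hxe, hc⟩ := he
        obtain ⟨u, rfl⟩ := hxe
        exact ⟨u, by simpa using ⟨he, hc u (by simp)⟩, rfl⟩
    · rw [Finset.card_eq_zero, Finset.filter_eq_empty_iff]
      exact fun e _ he => h (he.2 x he.1)
  rw [← hx, monoEdges, ← Finset.card_union_of_disjoint]
  · congr 1
    ext e
    simp only [Finset.mem_filter, Finset.mem_union]
    tauto
  · rw [Finset.disjoint_filter]
    tauto

theorem colorDegree_update_self (ξ : V → Fin k) (x : V) (b i : Fin k) :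
    colorDegree G (Function.update ξ x b) i x = colorDegree G ξ i x := by
  unfold colorDegree
  congr 1
  refine Finset.filter_congr fun u hu => ?_
  rw [Function.update_of_ne]
  rintro rfl
  simp at hu

theorem Phi_eq_add (α : Fin k → ℕ) (ξ : V → Fin k) (x : V) :
    Phi G α ξ =
      ∑ i, ((G.edgeFinset.filter fun e => x ∉ e ∧ ∀ v ∈ e, ξ v = i).card : ℚ) / α i +
        (colorDegree G ξ (ξ x) x : ℚ) / α (ξ x) := by
  unfold Phi
  simp_rw [monoEdges_eq_add ξ _ x]
  push_cast
  simp_rw [add_div, Finset.sum_add_distrib, ite_div, zero_div]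
  rw [Finset.sum_ite_eq Finset.univ (ξ x), if_pos (Finset.mem_univ _)]

theorem Phi_update (α : Fin k → ℕ) (ξ : V → Fin k) (x : V) (b : Fin k) :
    Phi G α (Function.update ξ x b) + (colorDegree G ξ (ξ x) x : ℚ) / α (ξ x) =
      Phi G α ξ + (colorDegree G ξ b x : ℚ) / α b := by
  rw [Phi_eq_add α (Function.update ξ x b) x, Phi_eq_add α ξ x, Function.update_self,
    colorDegree_update_self]
  have h : ∀ i, (G.edgeFinset.filter fun e => x ∉ e ∧ ∀ v ∈ e, Function.update ξ x b v = i) =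
      G.edgeFinset.filter fun e => x ∉ e ∧ ∀ v ∈ e, ξ v = i := by
    refine fun i => Finset.filter_congr fun e _ => and_congr_right fun hx => ?_
    refine forall₂_congr fun v hv => ?_
    rw [Function.update_of_ne]
    rintro rfl
    exact hx hv
  simp_rw [h]
  ring

/-- The monochromatic cliques which are too large for their color. -/
noncomputable def fullCliques (G : SimpleGraph V) (α : Fin k → ℕ) (ξ : V → Fin k) :
    Finset (Finset V) :=
  Finset.univ.filter fun s => ∃ i, IsFullClique G α ξ i s

/-- `ξ` minimizes `Phi` and, subject to this, the number of full cliques. -/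
structure IsOptimal_s1 (G : SimpleGraph V) [DecidableRel G.Adj] (α : Fin k → ℕ)
    (ξ : V → Fin k) : Prop where
  phi_le : ∀ ψ, Phi G α ξ ≤ Phi G α ψ
  card_le : ∀ ψ, (∀ φ, Phi G α ψ ≤ Phi G α φ) →
    (fullCliques G α ξ).card ≤ (fullCliques G α ψ).card

theorem exists_isOptimal_s1 (G : SimpleGraph V) [DecidableRel G.Adj] [NeZero k] (α : Fin k → ℕ) :
    ∃ ξ, IsOptimal_s1 G α ξ := by
  obtain ⟨φ, hφ⟩ := Finite.exists_min (Phi G α)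
  obtain ⟨ξ, hξ, h⟩ := Set.exists_min_image {ψ | ∀ φ, Phi G α ψ ≤ Phi G α φ}
    (fun ψ => (fullCliques G α ψ).card) (Set.toFinite _) ⟨φ, hφ⟩
  exact ⟨ξ, hξ, h⟩

namespace IsOptimal_s1

theorem mul_colorDegree_le (h : IsOptimal_s1 G α ξ) (hα : ∀ i, 2 ≤ α i) (b : Fin k) (v : V) :
    α b * colorDegree G ξ (ξ v) v ≤ α (ξ v) * colorDegree G ξ b v := by
  have h₁ := Phi_update (G := G) α ξ v b
  have h₂ := h.phi_le (Function.update ξ v b)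
  have h₃ : (colorDegree G ξ (ξ v) v : ℚ) / α (ξ v) ≤ (colorDegree G ξ b v : ℚ) / α b := by
    linarith
  have ha : (0 : ℚ) < α (ξ v) := by have := hα (ξ v); positivity
  have hb : (0 : ℚ) < α b := by have := hα b; positivity
  rw [div_le_div_iff₀ ha hb] at h₃
  have : colorDegree G ξ (ξ v) v * α b ≤ colorDegree G ξ b v * α (ξ v) := by exact_mod_cast h₃
  linarith

theorem colorDegree_le (h : IsOptimal_s1 G α ξ) (hα : ∀ i, 2 ≤ α i)
    (hdeg : ∀ v, G.degree v ≤ ∑ i, α i) (v : V) :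
    colorDegree G ξ (ξ v) v ≤ α (ξ v) := by
  by_contra! hlt
  have hgt : ∀ b, α b < colorDegree G ξ b v := by
    intro b
    have h₁ := h.mul_colorDegree_le hα b v
    have hb := hα b
    by_contra! hle
    have h₂ := Nat.mul_le_mul_left (α (ξ v)) hle
    nlinarith
  have := Finset.sum_lt_sum_of_nonempty ⟨ξ v, Finset.mem_univ _⟩ fun b _ => hgt b
  rw [sum_colorDegree] at this
  exact absurd (hdeg v) (by omega)

theorem colorDegree_eq (h : IsOptimal_s1 G α ξ) (hα : ∀ i, 2 ≤ α i)
    (hdeg : ∀ v, G.degree v ≤ ∑ i, α i) {v : V} (hv : α (ξ v) ≤ colorDegree G ξ (ξ v) v)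
    (b : Fin k) : colorDegree G ξ b v = α b := by
  have hge : ∀ b, α b ≤ colorDegree G ξ b v := by
    intro b
    have h₁ := h.mul_colorDegree_le hα b v
    have ha := hα (ξ v)
    have h₂ := Nat.mul_le_mul_left (α b) hv
    exact Nat.le_of_mul_le_mul_left (by linarith) (show 0 < α (ξ v) by omega)
  have hsum : ∑ i, α i = ∑ i, colorDegree G ξ i v :=
    le_antisymm (Finset.sum_le_sum fun b _ => hge b) (sum_colorDegree (G := G) ξ v ▸ hdeg v)
  exact ((Finset.sum_eq_sum_iff_of_le fun b _ => hge b).1 hsum b (Finset.mem_univ b)).symm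

end IsOptimal_s1

theorem IsFullClique.erase_subset (hA : IsFullClique G α ξ a A) (hx : x ∈ A) :
    A.erase x ⊆ (G.neighborFinset x).filter fun u => ξ u = a := by
  intro u hu
  rw [Finset.mem_erase] at hu
  rw [Finset.mem_filter, SimpleGraph.mem_neighborFinset]
  exact ⟨hA.1.1 hx hu.2 hu.1.symm, hA.2 u hu.2⟩

theorem IsFullClique.le_colorDegree (hA : IsFullClique G α ξ a A) (hx : x ∈ A) :
    α (ξ x) ≤ colorDegree G ξ (ξ x) x := by
  rw [hA.2 x hx, ← hA.card_erase hx]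
  exact Finset.card_le_card (hA.erase_subset hx)

namespace IsOptimal_s1

theorem mem_of_adj (h : IsOptimal_s1 G α ξ) (hα : ∀ i, 2 ≤ α i)
    (hdeg : ∀ v, G.degree v ≤ ∑ i, α i) (hA : IsFullClique G α ξ a A) (hx : x ∈ A)
    {u : V} (hu : ξ u = a) (hxu : G.Adj x u) : u ∈ A := by
  have hle := h.colorDegree_le hα hdeg x
  rw [hA.2 x hx] at hle
  have heq := Finset.eq_of_subset_of_card_le (hA.erase_subset hx)
    (hle.trans (hA.card_erase hx).ge)
  have : u ∈ A.erase x := by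
    rw [heq]
    simp [hxu, hu]
  exact Finset.mem_of_mem_erase this

/-- Recoloring a vertex of a full clique keeps optimality and creates a full clique in the new
color class. -/
theorem recolor (h : IsOptimal_s1 G α ξ) (hα : ∀ i, 2 ≤ α i)
    (hdeg : ∀ v, G.degree v ≤ ∑ i, α i) (hA : IsFullClique G α ξ a A) (hx : x ∈ A) :
    IsOptimal_s1 G α (Function.update ξ x b) ∧
      ∃ B, x ∈ B ∧ IsFullClique G α (Function.update ξ x b) b B := by
  have hphi : Phi G α (Function.update ξ x b) = Phi G α ξ := by
    have h₁ := Phi_update (G := G) α ξ x b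
    have hpos : ∀ i, (α i : ℚ) ≠ 0 := fun i => by have := hα i; positivity
    rw [h.colorDegree_eq hα hdeg (hA.le_colorDegree hx) b,
      h.colorDegree_eq hα hdeg (hA.le_colorDegree hx), div_self (hpos _), div_self (hpos _)] at h₁
    linarith
  have hmin : ∀ φ, Phi G α (Function.update ξ x b) ≤ Phi G α φ := fun φ => hphi ▸ h.phi_le φ
  have hkeep : ∀ s ∈ fullCliques G α (Function.update ξ x b), x ∉ s →
      s ∈ (fullCliques G α ξ).erase A := by
    intro s hs hxs
    rw [fullCliques, Finset.mem_filter] at hs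
    obtain ⟨-, i, hs, hi⟩ := hs
    refine Finset.mem_erase.2 ⟨fun e => hxs (e ▸ hx), ?_⟩
    refine Finset.mem_filter.2 ⟨Finset.mem_univ _, i, hs, fun v hv => ?_⟩
    rw [← hi v hv, Function.update_of_ne]
    rintro rfl
    exact hxs hv
  have hAmem : A ∈ fullCliques G α ξ := Finset.mem_filter.2 ⟨Finset.mem_univ _, a, hA⟩
  have hcard := Finset.card_erase_add_one hAmem
  have hB : ∃ B, x ∈ B ∧ IsFullClique G α (Function.update ξ x b) b B := by
    by_contra! hno
    have hsub : fullCliques G α (Function.update ξ x b) ⊆ (fullCliques G α ξ).erase A := by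
      intro s hs
      refine hkeep s hs fun hxs => ?_
      obtain ⟨-, i, hi⟩ := Finset.mem_filter.1 hs
      have : i = b := by rw [← hi.2 x hxs, Function.update_self]
      exact hno s hxs (this ▸ hi)
    have := Finset.card_le_card hsub
    have := h.card_le _ hmin
    omega
  refine ⟨⟨hmin, fun ψ hψ => le_trans ?_ (h.card_le ψ hψ)⟩, hB⟩
  have hsub : fullCliques G α (Function.update ξ x b) ⊆
      insert (insert x ((G.neighborFinset x).filter fun u => Function.update ξ x b u = b))
        ((fullCliques G α ξ).erase A) := by
    intro s hs
    by_cases hxs : x ∈ s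
    · obtain ⟨-, i, hi⟩ := Finset.mem_filter.1 hs
      obtain rfl : b = i := by rw [← hi.2 x hxs, Function.update_self]
      have hle : colorDegree G (Function.update ξ x b) b x ≤ α b :=
        (colorDegree_update_self ξ x b b).trans
          (h.colorDegree_eq hα hdeg (hA.le_colorDegree hx) b) |>.le
      rw [Finset.mem_insert, ← Finset.eq_of_subset_of_card_le (hi.erase_subset hxs)
        (hle.trans (hi.card_erase hxs).ge), Finset.insert_erase hxs]
      exact Or.inl rfl
    · exact Finset.mem_insert_of_mem (hkeep s hs hxs)
  exact ((Finset.card_le_card hsub).trans (Finset.card_insert_le _ _)).trans hcard.le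

/-- A vertex of another color with two neighbors in a full clique is adjacent to all of it. -/
theorem adj_of_adj_two (h : IsOptimal_s1 G α ξ) (hα : ∀ i, 2 ≤ α i)
    (hdeg : ∀ v, G.degree v ≤ ∑ i, α i) (hA : IsFullClique G α ξ a A) (hab : b ≠ a)
    {y z : V} (hx : x ∈ A) (hz : z ∈ A) (hxz : x ≠ z) (hy : ξ y = b)
    (hxy : G.Adj x y) (hzy : G.Adj z y) {w : V} (hw : w ∈ A) : G.Adj w y := by
  obtain ⟨h', B, hxB, hB⟩ := h.recolor hα hdeg hA hx
  have hyB : y ∈ B := h'.mem_of_adj hα hdeg hB hxB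
    (by rw [Function.update_of_ne hxy.ne.symm, hy]) hxy
  obtain ⟨h'', C, hyC, hC⟩ := h'.recolor hα hdeg hB hyB
  have hcol : ∀ v ∈ A, v ≠ x →
      Function.update (Function.update ξ x b) y a v = a := by
    intro v hv hvx
    have hvy : v ≠ y := by
      rintro rfl
      exact hab (hy.symm.trans (hA.2 v hv))
    rw [Function.update_of_ne hvy, Function.update_of_ne hvx, hA.2 v hv]
  have hzC : z ∈ C := h''.mem_of_adj hα hdeg hC hyC (hcol z hz hxz.symm) hzy.symm
  rcases eq_or_ne w x with rfl | hwx
  · exact hxy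
  rcases eq_or_ne w z with rfl | hwz
  · exact hzy
  have hwC : w ∈ C := h''.mem_of_adj hα hdeg hC hzC (hcol w hw hwx) (hA.1.1 hz hw hwz.symm)
  refine hC.1.1 hwC hyC ?_
  rintro rfl
  exact hab (hy.symm.trans (hA.2 w hw))

end IsOptimal_s1

/-- A state in the process of recoloring, alternately from `a` to `b` and back, one vertex of the
current full clique `A`. The vertex `x` was recolored last and `U` collects the full cliques
met before. No vertex of color `b` has two neighbors in `A`, and `U` apart from `x` is covered by
monochromatic cliques `R` to which no vertex outside `U` of the other color is completely
joined. -/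
structure IsTrail (G : SimpleGraph V) [DecidableRel G.Adj] (α : Fin k → ℕ) (a b : Fin k)
    (ξ : V → Fin k) (A : Finset V) (x : V) (U : Finset V) : Prop where
  isOptimal : IsOptimal_s1 G α ξ
  isFullClique : IsFullClique G α ξ a A
  mem : x ∈ A
  notMem : ∀ w ∈ A, w ≠ x → w ∉ U
  sparse : ∀ y, ξ y = b → ∀ u ∈ A, ∀ v ∈ A, G.Adj u y → G.Adj v y → u = v
  cover : ∀ w ∈ U, w ≠ x → ∃ R ⊆ U, w ∈ R ∧ (∀ u ∈ R, ξ u = ξ w) ∧ G.IsClique R ∧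
    ∀ y ∉ U, (ξ y = a ∨ ξ y = b) → ξ y ≠ ξ w → ∃ u ∈ R, ¬ G.Adj u y

namespace IsTrail

variable {U : Finset V}

theorem exists_next (hα : ∀ i, 2 ≤ α i) (hdeg : ∀ v, G.degree v ≤ ∑ i, α i) (hab : b ≠ a)
    (h : IsTrail G α a b ξ A x U) :
    ∃ ξ' A' x' U', IsTrail G α b a ξ' A' x' U' ∧ U.card < U'.card := by
  have hopt := h.isOptimal
  have hA := h.isFullClique
  obtain ⟨t, htA, htx⟩ := Finset.exists_mem_ne (s := A) (by rw [hA.1.2]; have := hα a; omega) x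
  have htU := h.notMem t htA htx
  obtain ⟨hopt', B, htB, hB⟩ := hopt.recolor hα hdeg hA htA
  have hcol : ∀ v, v ≠ t → Function.update ξ t b v = ξ v := fun v hv =>
    Function.update_of_ne hv _ _
  refine ⟨Function.update ξ t b, B, t, U ∪ A, ⟨hopt', hB, htB, ?_, ?_, ?_⟩, ?_⟩
  · intro w hwB hwt hwU
    have hwb : ξ w = b := by rw [← hcol w hwt, hB.2 w hwB]
    have hwA : w ∉ A := fun hwA => hab (hwb.symm.trans (hA.2 w hwA))
    have hwU : w ∈ U := (Finset.mem_union.1 hwU).resolve_right hwA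
    obtain ⟨R, hRU, hwR, hRw, hR, hy⟩ := h.cover w hwU fun e => hwA (e ▸ h.mem)
    obtain ⟨u, huR, hut⟩ := hy t htU (Or.inl (hA.2 t htA)) (by rw [hA.2 t htA, hwb]; exact hab.symm)
    have hne : u ≠ t := fun e => htU (e ▸ hRU huR)
    refine hut (hB.1.1 ?_ htB hne)
    rcases eq_or_ne u w with rfl | huw
    · exact hwB
    · exact hopt'.mem_of_adj hα hdeg hB hwB (by rw [hcol u hne, hRw u huR, hwb])
        (hR hwR huR huw.symm)
  · intro y hy u hu v hv huy hvy
    by_contra huv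
    have hty := hopt'.adj_of_adj_two hα hdeg hB hab.symm hu hv huv hy huy hvy htB
    have hyA : y ∈ A := hopt.mem_of_adj hα hdeg hA htA (by rw [← hcol y hty.ne.symm, hy]) hty
    obtain ⟨z, hzB, hzt⟩ :=
      Finset.exists_mem_ne (s := B) (by rw [hB.1.2]; have := hα b; omega) t
    have hzy := hopt'.adj_of_adj_two hα hdeg hB hab.symm hu hv huv hy huy hvy hzB
    exact hty.ne (h.sparse z (by rw [← hcol z hzt, hB.2 z hzB]) t htA y hyA
      (hB.1.1 htB hzB hzt.symm) hzy.symm)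
  · intro w hw hwt
    by_cases hwA : w ∈ A
    · refine ⟨A.erase t, (Finset.erase_subset _ _).trans Finset.subset_union_right,
        Finset.mem_erase.2 ⟨hwt, hwA⟩, fun u hu => ?_, hA.1.1.subset (by simp), ?_⟩
      · rw [Finset.mem_erase] at hu
        rw [hcol u hu.1, hcol w hwt, hA.2 u hu.2, hA.2 w hwA]
      · intro y hyU hyc hyw
        rw [hcol w hwt, hA.2 w hwA] at hyw
        have hyt : y ≠ t := fun e => hyU (Finset.mem_union_right _ (e ▸ htA))
        have hyb := hyc.resolve_right hyw
        rw [hcol y hyt] at hyb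
        by_contra! hall
        obtain ⟨u, hu, huw⟩ := Finset.exists_mem_ne (s := A.erase t)
          (by rw [hA.card_erase htA]; exact hα a) w
        exact huw (h.sparse y hyb u (Finset.mem_of_mem_erase hu) w hwA (hall u hu)
          (hall w (Finset.mem_erase.2 ⟨hwt, hwA⟩)))
    · have hwU : w ∈ U := (Finset.mem_union.1 hw).resolve_right hwA
      obtain ⟨R, hRU, hwR, hRw, hR, hy⟩ := h.cover w hwU fun e => hwA (e ▸ h.mem)
      refine ⟨R, hRU.trans Finset.subset_union_left, hwR, fun u hu => ?_, hR, ?_⟩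
      · rw [hcol u fun e => htU (e ▸ hRU hu), hcol w hwt, hRw u hu]
      · intro y hyU hyc hyw
        have hyt : y ≠ t := fun e => hyU (Finset.mem_union_right _ (e ▸ htA))
        rw [hcol y hyt] at hyc hyw
        rw [hcol w hwt] at hyw
        exact hy y (fun hyU' => hyU (Finset.mem_union_left _ hyU')) hyc.symm hyw
  · exact Finset.card_lt_card (Finset.ssubset_iff_subset_ne.2 ⟨Finset.subset_union_left,
      fun e => htU (e ▸ Finset.mem_union_right _ htA)⟩)

theorem false (hα : ∀ i, 2 ≤ α i) (hdeg : ∀ v, G.degree v ≤ ∑ i, α i) (hab : b ≠ a)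
    (h : IsTrail G α a b ξ A x U) : False := by
  induction hn : Fintype.card V - U.card using Nat.strong_induction_on
    generalizing a b ξ A x U with
  | _ n ih =>
    obtain ⟨ξ', A', x', U', h', hlt⟩ := h.exists_next hα hdeg hab
    have := Finset.card_le_univ U'
    exact ih _ (by omega) hab.symm h' rfl

end IsTrail

namespace IsOptimal_s1

theorem exists_forall_adj (h : IsOptimal_s1 G α ξ) (hα : ∀ i, 2 ≤ α i)
    (hdeg : ∀ v, G.degree v ≤ ∑ i, α i) (hA : IsFullClique G α ξ a A) (hab : b ≠ a) :
    ∃ y, ξ y = b ∧ ∀ w ∈ A, G.Adj w y := by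
  by_contra! hno
  obtain ⟨x, hx⟩ : A.Nonempty := Finset.card_pos.1 (by rw [hA.1.2]; omega)
  refine IsTrail.false (U := ∅) hα hdeg hab ⟨h, hA, hx, by simp, ?_, by simp⟩
  intro y hy u hu v hv huy hvy
  by_contra huv
  obtain ⟨w, hw, hwy⟩ := hno y hy
  exact hwy (h.adj_of_adj_two hα hdeg hA hab hu hv huv hy huy hvy hw)

/-- The vertices of a full clique have the same neighbors in any other color class. -/
theorem adj_of_adj (h : IsOptimal_s1 G α ξ) (hα : ∀ i, 2 ≤ α i)
    (hdeg : ∀ v, G.degree v ≤ ∑ i, α i) (hA : IsFullClique G α ξ a A) (hx : x ∈ A)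
    {u z : V} (hu : ξ u ≠ a) (hxu : G.Adj x u) (hz : z ∈ A) : G.Adj z u := by
  obtain ⟨y, hy, hyA⟩ := h.exists_forall_adj hα hdeg hA hu
  rcases eq_or_ne u y with rfl | huy
  · exact hyA z hz
  have huz : u ≠ z := fun e => hu (e ▸ hA.2 z hz)
  have hyu : G.Adj y u := by
    obtain ⟨h', B, hxB, hB⟩ := h.recolor hα hdeg hA hx
    have hyB : y ∈ B := h'.mem_of_adj hα hdeg hB hxB
      (by rw [Function.update_of_ne (hyA x hx).ne.symm, hy]) (hyA x hx)
    have huB : u ∈ B := h'.mem_of_adj hα hdeg hB hxB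
      (by rw [Function.update_of_ne hxu.ne.symm]) hxu
    exact hB.1.1 hyB huB huy.symm
  obtain ⟨h', B, hzB, hB⟩ := h.recolor hα hdeg hA hz
  have hyB : y ∈ B := h'.mem_of_adj hα hdeg hB hzB
    (by rw [Function.update_of_ne (hyA z hz).ne.symm, hy]) (hyA z hz)
  have huB : u ∈ B := h'.mem_of_adj hα hdeg hB hyB (by rw [Function.update_of_ne huz]) hyu
  exact hB.1.1 hzB huB huz.symm

theorem isClique_neighborSet (h : IsOptimal_s1 G α ξ) (hα : ∀ i, 2 ≤ α i)
    (hdeg : ∀ v, G.degree v ≤ ∑ i, α i) (hA : IsFullClique G α ξ a A) (hx : x ∈ A) :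
    G.IsClique (G.neighborSet x) := by
  have key : ∀ {ζ : V → Fin k} {B : Finset V} {i : Fin k}, IsOptimal_s1 G α ζ →
      IsFullClique G α ζ i B → x ∈ B → ∀ {u v}, ζ u = i → G.Adj x u → G.Adj x v → u ≠ v →
      G.Adj u v := by
    intro ζ B i hζ hB hxB u v hu hxu hxv huv
    have huB := hζ.mem_of_adj hα hdeg hB hxB hu hxu
    by_cases hv : ζ v = i
    · exact hB.1.1 huB (hζ.mem_of_adj hα hdeg hB hxB hv hxv) huv
    · exact hζ.adj_of_adj hα hdeg hB hxB hv hxv huB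
  intro u hu v hv huv
  rw [SimpleGraph.mem_neighborSet] at hu hv
  by_cases hua : ξ u = a
  · exact key h hA hx hua hu hv huv
  · obtain ⟨h', B, hxB, hB⟩ := h.recolor hα hdeg hA hx
    exact key h' hB hxB (Function.update_of_ne hu.ne.symm _ _) hu hv huv

theorem isNClique_insert_neighborFinset (h : IsOptimal_s1 G α ξ) (hα : ∀ i, 2 ≤ α i)
    (hdeg : ∀ v, G.degree v ≤ ∑ i, α i) (hA : IsFullClique G α ξ a A) (hx : x ∈ A) :
    G.IsNClique (∑ i, α i + 1) (insert x (G.neighborFinset x)) := by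
  have hcl : G.IsNClique (∑ i, α i) (G.neighborFinset x) := by
    refine ⟨by simpa using h.isClique_neighborSet hα hdeg hA hx, ?_⟩
    rw [SimpleGraph.card_neighborFinset_eq_degree, ← sum_colorDegree ξ x]
    exact Finset.sum_congr rfl fun i _ => h.colorDegree_eq hα hdeg (hA.le_colorDegree hx) i
  exact hcl.insert fun u hu => (SimpleGraph.mem_neighborFinset G x u).1 hu

end IsOptimal_s1

end

/-- Let `G` be a finite simple graph with maximum degree at most `D` and no
clique on `D+1` vertices, and let `D = α_1 + ⋯ + α_{c+1}` with each `α_i ≥ 2`. Then there is a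
coloring `ξ` of `V(G)` with `c+1` colors minimizing `Φ` such that for every color `i` there is
no clique on `α_i + 1` vertices all of color `i`. -/
theorem exists_phi_minimizer_no_large_clique {V : Type*} [Fintype V] [DecidableEq V]
    (G : SimpleGraph V) [DecidableRel G.Adj] (D c : ℕ)
    (α : Fin (c + 1) → ℕ) (hα : ∀ i, 2 ≤ α i) (hsum : ∑ i, α i = D)
    (hdeg : ∀ v : V, G.degree v ≤ D) (hfree : G.CliqueFree (D + 1)) :
    ∃ ξ : V → Fin (c + 1),
      (∀ ψ : V → Fin (c + 1), Phi G α ξ ≤ Phi G α ψ) ∧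
      (∀ i : Fin (c + 1), ¬ ∃ s : Finset V,
        G.IsNClique (α i + 1) s ∧ ∀ v ∈ s, ξ v = i) := by
  subst hsum
  obtain ⟨ξ, hξ⟩ := exists_isOptimal_s1 G α
  refine ⟨ξ, hξ.phi_le, fun i ⟨s, hs⟩ => ?_⟩
  obtain ⟨x, hx⟩ : s.Nonempty := Finset.card_pos.1 (by rw [hs.1.2]; omega)
  exact hfree _ (hξ.isNClique_insert_neighborFinset hα hdeg hs hx)
end
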